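/- Let k be a field of characteristic not equal to 2 with a fixed algebraic closure, let f(z) = z² + c ∈ k[z] with f^r(0) = 0 for a minimal integer r ≥ 1, and let x_0 ∈ k. Define D_1 := x_0 − c and D_i := f^i(0) − x_0 for 2 ≤ i ≤ r. For n ≥ 1 let K_{x_0,n} be the splitting field of f^n(X) − x_0 over k inside the algebraic closure, K_{x_0,∞} = ⋃_n K_{x_0,n}, and G_{x_0,∞} = Gal(K_{x_0,∞}/k). Then the following are equivalent: (1) [k(ζ_8, √D_1, …, √D_r) : k] = 2^{r+2}, where ζ_8 is a primitive 8th root of unity; (2) [K_{x_0,2r+1} : k] = |M_{r,2r+1}|; (3) [K_{x_0,n} : k] = |M_{r,n}| for every n ≥ 1; (4) there exists a labeling ℓ of the tree of iterated preimages of x_0 — a map from finite words over {a,b} to the algebraic closure with ℓ(empty word) = x_0, f(ℓ(wa)) = f(ℓ(wb)) = ℓ(w), and ℓ(wa) = −ℓ(wb) — such that the map sending each σ ∈ G_{x_0,∞} to the tree automorphism τ determined by σ(ℓ(w)) = ℓ(τ(w)) for all words w is a group isomorphism from G_{x_0,∞} onto M_{r,∞}. -/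

import Mathlib

/-- Nodes of the infinite binary rooted tree `T_∞` are finite words over `{a,b}`,
encoded as `List Bool` with `a = false` and `b = true`; children of `w` are
`w ++ [false]` and `w ++ [true]`. An automorphism of `T_∞`. -/
def IsTreeAut (σ : List Bool → List Bool) : Prop :=
  Function.Bijective σ ∧ (∀ w, (σ w).length = w.length) ∧
    ∀ w s, ∃ t, σ (w ++ [s]) = σ w ++ [t]

/-- The parity `Par(σ,x) ∈ {0,1}`: `0` if `σ(xa) = σ(x)a`, and `1` otherwise. -/
def par (σ : List Bool → List Bool) (x : List Bool) : ℕ :=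
  if σ (x ++ [false]) = σ x ++ [false] then 0 else 1

/-- `W(r,i)`: the words `s₁ ⋯ s_{ri−1}` of length `r*i − 1` over `{a,b}` with
`s_j = a` whenever `r ∣ j`. -/
noncomputable def Wset (r i : ℕ) : Finset (List Bool) :=
  ((Finset.univ : Finset (Fin (r*i-1) → Bool)).filter
    (fun s => ∀ j : Fin (r*i-1), r ∣ (j:ℕ)+1 → s j = false)).image List.ofFn

/-- `Q_r(σ,x) := Σ_{i≥1} 2^i Σ_{w ∈ W(r,i)} Par(σ, xw)` in `ℤ₂`. -/
noncomputable def Qr (r : ℕ) (σ : List Bool → List Bool) (x : List Bool) : ℤ_[2] :=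
  ∑' i : ℕ, (2:ℤ_[2])^(i+1) * ∑ w ∈ Wset r (i+1), (par σ (x ++ w) : ℤ_[2])

/-- `P_r(σ,x) := (−1)^{Par(σ,x)} + Q_r(σ,xb) − Q_r(σ,xa)` in `ℤ₂`. -/
noncomputable def Pr (r : ℕ) (σ : List Bool → List Bool) (x : List Bool) : ℤ_[2] :=
  (-1:ℤ_[2])^(par σ x) + Qr r σ (x ++ [true]) - Qr r σ (x ++ [false])

/-- `M_{r,∞}`: tree automorphisms for which `P_r(σ,·)` is constant. -/
def Mset (r : ℕ) : Set (List Bool → List Bool) :=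
  {σ | IsTreeAut σ ∧ ∀ x₁ x₂ : List Bool, Pr r σ x₁ = Pr r σ x₂}

/-- `B_{r,∞}`: elements of `M_{r,∞}` with common value `P_r(σ) = 1`. -/
def Bset (r : ℕ) : Set (List Bool → List Bool) :=
  {σ | σ ∈ Mset r ∧ Pr r σ [] = 1}

open Polynomial

/-- `M_{r,n}`: the set of restrictions of elements of `M_{r,∞}` to words of length at
most `n`. -/
def MsetN (r n : ℕ) : Set ({w : List Bool // w.length ≤ n} → List Bool) :=
  (fun σ => fun w : {w : List Bool // w.length ≤ n} => σ w.1) '' Mset r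


/-! ### Portraits -/

/-- A portrait of a tree automorphism. -/
def Port := List Bool → Bool

namespace Port

/-- build a portrait -/
def ofFun (f : List Bool → Bool) : Port := f
@[simp] lemma ofFun_apply (f : List Bool → Bool) (w : List Bool) : ofFun f w = f w := rfl

/-- section of a portrait at one letter -/
def sec1 (e : Port) (s : Bool) : Port := fun w => e (s :: w)

/-- section of a portrait -/
def sec (e : Port) (x : List Bool) : Port := fun w => e (x ++ w)

/-- the action of a portrait -/
def act : Port → List Bool → List Bool
  | _, [] => []
  | e, s :: w => (xor s (e [])) :: act (e.sec1 s) w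

@[simp] lemma act_nil (e : Port) : e.act [] = [] := rfl
lemma act_cons (e : Port) (s : Bool) (w : List Bool) :
    e.act (s :: w) = (xor s (e [])) :: (e.sec1 s).act w := rfl

@[simp] lemma length_act (e : Port) (w : List Bool) : (e.act w).length = w.length := by
  induction w generalizing e with
  | nil => rfl
  | cons s w ih => simp [act_cons, ih]

lemma act_append (e : Port) (x w : List Bool) :
    e.act (x ++ w) = e.act x ++ (e.sec x).act w := by
  induction x generalizing e with
  | nil => rfl
  | cons s x ih =>
    simp only [List.cons_append, act_cons, ih]
    rfl

lemma act_snoc (e : Port) (x : List Bool) (s : Bool) :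
    e.act (x ++ [s]) = e.act x ++ [xor s (e x)] := by
  rw [act_append, act_cons]
  simp [sec]

/-- identity portrait -/
protected def one' : Port := fun _ => false
/-- product portrait -/
protected def mul' (e d : Port) : Port := fun w => xor (d w) (e (d.act w))
/-- inverse portrait (auxiliary) -/
protected def inv' : Port → List Bool → Bool
  | e, [] => e []
  | e, s :: w => Port.inv' (e.sec1 (xor s (e []))) w

instance : One Port := ⟨Port.one'⟩
instance : Mul Port := ⟨Port.mul'⟩
instance : Inv Port := ⟨fun e => Port.inv' e⟩

lemma one_apply (w : List Bool) : (1 : Port) w = false := rfl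
lemma mul_apply (e d : Port) (w : List Bool) : (e * d) w = xor (d w) (e (d.act w)) := rfl

lemma ext {e d : Port} (h : ∀ w, e w = d w) : e = d := funext h

@[simp] lemma act_one (w : List Bool) : (1 : Port).act w = w := by
  induction w with
  | nil => rfl
  | cons s w ih =>
    rw [act_cons]
    have : (1 : Port).sec1 s = 1 := rfl
    rw [this, ih]; simp [one_apply]

lemma act_mul (e d : Port) (w : List Bool) : (e * d).act w = e.act (d.act w) := by
  induction w using List.reverseRecOn with
  | nil => rfl
  | append_singleton w s ih =>
    rw [act_snoc, act_snoc, act_snoc, ih, mul_apply]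
    simp

lemma inv_mul_apply (e : Port) (w : List Bool) : (e⁻¹ * e) w = false := by
  rw [mul_apply]
  have key : ∀ (w : List Bool) (e : Port), Port.inv' e (e.act w) = e w := by
    intro w
    induction w with
    | nil => intro e; rfl
    | cons s w ih =>
      intro e
      rw [act_cons, Port.inv']
      simp only [Bool.xor_assoc, Bool.xor_self, Bool.xor_false]
      rw [ih]; rfl
  have : (e⁻¹ : Port) (e.act w) = e w := key w e
  rw [this]; simp

instance : Group Port := Group.ofLeftAxioms
  (fun a b c => ext fun w => by
    simp only [mul_apply, act_mul]; simp)
  (fun a => ext fun w => by simp [mul_apply, one_apply])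
  (fun a => ext fun w => inv_mul_apply a w)

@[simp] lemma act_inv_act (e : Port) (w : List Bool) : (e⁻¹).act (e.act w) = w := by
  rw [← act_mul]; simp
@[simp] lemma act_act_inv (e : Port) (w : List Bool) : e.act ((e⁻¹).act w) = w := by
  rw [← act_mul]; simp

lemma act_bijective (e : Port) : Function.Bijective e.act :=
  ⟨fun a b h => by rw [← act_inv_act e a, h, act_inv_act], fun b => ⟨_, act_act_inv e b⟩⟩

lemma isTreeAut_act (e : Port) : IsTreeAut e.act :=
  ⟨act_bijective e, length_act e, fun w s => ⟨_, act_snoc e w s⟩⟩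

lemma par_act (e : Port) (w : List Bool) : par e.act w = (e w).toNat := by
  unfold par
  rw [act_snoc]
  cases e w <;> simp

lemma act_injective : Function.Injective act := by
  intro e d h
  apply ext
  intro w
  have h1 := par_act e w
  rw [h, par_act] at h1
  revert h1
  cases e w <;> cases d w <;> simp

lemma exists_of_isTreeAut {σ : List Bool → List Bool} (h : IsTreeAut σ) :
    ∃ e : Port, e.act = σ := by
  obtain ⟨hb, hl, hs⟩ := h
  refine ⟨ofFun fun w => decide (σ (w ++ [false]) ≠ σ w ++ [false]), ?_⟩
  funext w
  induction w using List.reverseRecOn with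
  | nil =>
    have := hl []
    simp at this
    simp [this]
  | append_singleton w s ih =>
    rw [act_snoc, ih, ofFun_apply]
    obtain ⟨t, ht⟩ := hs w false
    obtain ⟨t', ht'⟩ := hs w true
    have hne : t ≠ t' := by
      rintro rfl
      have := hb.1 (ht.trans ht'.symm)
      simp at this
    cases s
    · rw [ht]; cases t <;> simp
    · rw [ht', ht]; cases t <;> cases t' <;> simp at hne ⊢

/-- agreement up to level n -/
def agr (n : ℕ) (e d : Port) : Prop := ∀ w : List Bool, w.length < n → e w = d w

lemma agr.act_eq {n : ℕ} {e d : Port} (h : agr n e d) {w : List Bool} (hw : w.length ≤ n) :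
    e.act w = d.act w := by
  induction w using List.reverseRecOn with
  | nil => rfl
  | append_singleton w s ih =>
    simp at hw
    rw [act_snoc, act_snoc, ih (by omega), h w (by omega)]

lemma agr_of_act_eq {n : ℕ} {e d : Port} (h : ∀ w : List Bool, w.length ≤ n → e.act w = d.act w) :
    agr n e d := by
  intro w hw
  have h1 := h (w ++ [false]) (by simp; omega)
  rw [act_snoc, act_snoc, h w hw.le] at h1
  simpa using h1

lemma agr.mul {n : ℕ} {e d e' d' : Port} (h : agr n e d) (h' : agr n e' d') :
    agr n (e * e') (d * d') := by
  apply agr_of_act_eq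
  intro w hw
  rw [act_mul, act_mul, h'.act_eq hw, h.act_eq (by simpa using hw)]

lemma agr.symm {n : ℕ} {e d : Port} (h : agr n e d) : agr n d e := fun w hw => (h w hw).symm
lemma agr.refl (n : ℕ) (e : Port) : agr n e e := fun _ _ => rfl
lemma agr.trans {n : ℕ} {e d f : Port} (h : agr n e d) (h' : agr n d f) : agr n e f :=
  fun w hw => (h w hw).trans (h' w hw)
lemma agr.inv {n : ℕ} {e d : Port} (h : agr n e d) : agr n e⁻¹ d⁻¹ := by
  have h1 : agr n (e⁻¹ * e * d⁻¹) (e⁻¹ * d * d⁻¹) := ((agr.refl n _).mul h).mul (agr.refl n _)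
  simp at h1
  exact h1.symm
lemma agr.mono {n m : ℕ} {e d : Port} (h : agr n e d) (hm : m ≤ n) : agr m e d :=
  fun w hw => h w (by omega)

/-- pairs -/
def pair (t : Bool) (g h : Port) : Port
  | [] => t
  | false :: w => g w
  | true :: w => h w

@[simp] lemma pair_nil (t : Bool) (g h : Port) : pair t g h [] = t := rfl
@[simp] lemma pair_false (t : Bool) (g h : Port) (w) : pair t g h (false :: w) = g w := rfl
@[simp] lemma pair_true (t : Bool) (g h : Port) (w) : pair t g h (true :: w) = h w := rfl

lemma act_pair_false (t : Bool) (g h : Port) (w : List Bool) :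
    (pair t g h).act (false :: w) = t :: g.act w := by
  rw [act_cons]; simp; rfl
lemma act_pair_true (t : Bool) (g h : Port) (w : List Bool) :
    (pair t g h).act (true :: w) = (!t) :: h.act w := by
  rw [act_cons]; simp; rfl

lemma pair_eta (e : Port) : pair (e []) (e.sec1 false) (e.sec1 true) = e := by
  apply ext
  rintro (_ | ⟨_ | _, w⟩) <;> rfl

lemma pair_mul_ff (t : Bool) (g h g' h' : Port) :
    pair t g h * pair false g' h' = pair t (g * g') (h * h') := by
  apply ext
  rintro (_ | ⟨_ | _, w⟩)
  · simp [mul_apply]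
  · simp [mul_apply, act_pair_false]
  · simp [mul_apply, act_pair_true]

lemma pair_mul_tt (t : Bool) (g h g' h' : Port) :
    pair t g h * pair true g' h' = pair (!t) (h * g') (g * h') := by
  apply ext
  rintro (_ | ⟨_ | _, w⟩)
  · simp [mul_apply]
  · simp [mul_apply, act_pair_false]
  · simp [mul_apply, act_pair_true]

lemma pair_one : pair false 1 1 = 1 := by
  apply ext
  rintro (_ | ⟨_ | _, w⟩) <;> rfl

lemma pair_inv (g h : Port) : (pair false g h)⁻¹ = pair false g⁻¹ h⁻¹ := by
  rw [inv_eq_iff_mul_eq_one, pair_mul_ff]; simp [pair_one]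

lemma agr.pair {n : ℕ} {g h g' h' : Port} (t : Bool) (h1 : agr n g g') (h2 : agr n h h') :
    agr (n + 1) (pair t g h) (pair t g' h') := by
  rintro (_ | ⟨_ | _, w⟩) hw
  · rfl
  · exact h1 w (by simpa using hw)
  · exact h2 w (by simpa using hw)

end Port

/-- Level by level construction of portraits. -/
lemma build_port (C : ℕ → Port → Prop)
    (hloc : ∀ m (e e' : Port), (∀ w : List Bool, w.length ≤ m → e w = e' w) → C m e → C m e')
    (step : ∀ m (e : Port), (∀ m' < m, C m' e) →
      ∃ e' : Port, (∀ w : List Bool, w.length < m → e' w = e w) ∧ C m e') :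
    ∃ e : Port, ∀ m, C m e := by
  classical
  choose! nx hnx1 hnx2 using step
  let s : ℕ → Port := fun n => Nat.rec (1 : Port) (fun m e => nx m e) n
  have hs : ∀ m, s (m + 1) = nx m (s m) := fun m => rfl
  have h1 : ∀ m, ∀ m' < m, C m' (s m) := by
    intro m
    induction m with
    | zero => intro m' h; omega
    | succ m ih =>
      intro m' hm'
      rw [hs]
      rcases Nat.lt_succ_iff_lt_or_eq.1 hm' with h | h
      · exact hloc m' (s m) _ (fun w hw => (hnx1 m _ ih w (by omega)).symm) (ih m' h)
      · subst h; exact hnx2 m' _ ih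
  have h2 : ∀ m w, w.length < m → ∀ n, m ≤ n → s n w = s m w := by
    intro m w hw n hn
    induction n, hn using Nat.le_induction with
    | base => rfl
    | succ n hn ih => rw [hs, hnx1 n _ (h1 n) w (by omega), ih]
  refine ⟨Port.ofFun fun w => s (w.length + 1) w, fun m => ?_⟩
  refine hloc m (s (m + 1)) _ (fun w hw => ?_) (h1 (m + 1) m (by omega))
  exact h2 (w.length + 1) w (by omega) (m + 1) (by omega)

/-! ### Words -/

/-- all words of length n -/
def wds : ℕ → Finset (List Bool)
  | 0 => {[]}
  | n + 1 => (wds n).image (List.cons false) ∪ (wds n).image (List.cons true)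

lemma mem_wds {n : ℕ} {w : List Bool} : w ∈ wds n ↔ w.length = n := by
  induction n generalizing w with
  | zero => simp [wds]
  | succ n ih =>
    rcases w with _ | ⟨_ | _, w⟩ <;> simp [wds, ih]

lemma prod_wds_succ {M : Type*} [CommMonoid M] (n : ℕ) (g : List Bool → M) :
    ∏ u ∈ wds (n + 1), g u = (∏ u ∈ wds n, g (false :: u)) * ∏ u ∈ wds n, g (true :: u) := by
  rw [wds, Finset.prod_union, Finset.prod_image, Finset.prod_image]
  · intro a _ b _ h; simpa using h
  · intro a _ b _ h; simpa using h
  · rw [Finset.disjoint_left]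
    intro a ha hb
    simp at ha hb
    obtain ⟨x, -, rfl⟩ := ha
    obtain ⟨y, -, h⟩ := hb
    simp at h

lemma card_wds (n : ℕ) : (wds n).card = 2 ^ n := by
  induction n with
  | zero => rfl
  | succ n ih =>
    have := prod_wds_succ n (fun _ => Multiplicative.ofAdd (1 : ℕ))
    simp only [Finset.prod_const] at this
    have h2 := congrArg Multiplicative.toAdd this
    simp at h2
    rw [h2, ih]; ring

lemma prod_wds_act {M : Type*} [CommMonoid M] (n : ℕ) (e : Port) (g : List Bool → M) :
    ∏ u ∈ wds n, g (e.act u) = ∏ u ∈ wds n, g u := by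
  refine Finset.prod_nbij' (fun u => e.act u) (fun u => e⁻¹.act u) ?_ ?_ ?_ ?_ ?_
  · intro a ha; simpa [mem_wds] using ha
  · intro a ha; simpa [mem_wds] using ha
  · simp
  · simp
  · simp

lemma prod_wds_act' {M : Type*} [CommMonoid M] (n : ℕ) (e : Port) (x : List Bool)
    (g : List Bool → M) :
    ∏ u ∈ wds n, g (e.act (x ++ u)) = ∏ u ∈ wds n, g (e.act x ++ u) := by
  simp_rw [Port.act_append]
  exact prod_wds_act n (e.sec x) (fun u => g (e.act x ++ u))

lemma sum_wds_act' {M : Type*} [AddCommMonoid M] (n : ℕ) (e : Port) (x : List Bool)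
    (g : List Bool → M) :
    ∑ u ∈ wds n, g (e.act (x ++ u)) = ∑ u ∈ wds n, g (e.act x ++ u) :=
  prod_wds_act' (M := Multiplicative M) n e x (fun w => Multiplicative.ofAdd (g w))

lemma mem_Wset {r i : ℕ} {w : List Bool} :
    w ∈ Wset r i ↔ w.length = r * i - 1 ∧ ∀ j, r ∣ j + 1 → w[j]? ≠ some true := by
  unfold Wset
  simp only [Finset.mem_image, Finset.mem_filter, Finset.mem_univ, true_and]
  constructor
  · rintro ⟨s, hs, rfl⟩
    refine ⟨by simp, fun j hj h => ?_⟩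
    rw [List.getElem?_eq_some_iff] at h
    obtain ⟨h1, h2⟩ := h
    simp at h1 h2
    have := hs ⟨j, h1⟩ hj
    rw [this] at h2; simp at h2
  · rintro ⟨h1, h2⟩
    refine ⟨fun j => w[(j : ℕ)]'(by rw [h1]; exact j.2), fun j hj => ?_, ?_⟩
    · have := h2 j hj
      rw [List.getElem?_eq_getElem (by rw [h1]; exact j.2)] at this
      simpa using this
    · apply List.ext_getElem
      · simp [h1]
      · intro n hn hn'
        simp

lemma Wset_one (r : ℕ) : Wset r 1 = wds (r - 1) := by
  ext w
  rw [mem_Wset, mem_wds]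
  simp only [mul_one]
  refine ⟨fun h => h.1, fun h => ⟨h, fun j hj => ?_⟩⟩
  have := Nat.le_of_dvd (by omega) hj
  rw [List.getElem?_eq_none (by omega)]
  simp

lemma Wset_succ {r i : ℕ} (hr : 1 ≤ r) (hi : 1 ≤ i) :
    Wset r (i + 1) = (wds (r - 1) ×ˢ Wset r i).image (fun p => p.1 ++ false :: p.2) := by
  have hri : r ≤ r * i := Nat.le_mul_of_pos_right r hi
  ext w
  simp only [Finset.mem_image, Finset.mem_product, Prod.exists]
  constructor
  · intro h
    rw [mem_Wset] at h
    obtain ⟨h1, h2⟩ := h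
    rw [mul_add, mul_one] at h1
    refine ⟨w.take (r - 1), w.drop r, ⟨?_, ?_⟩, ?_⟩
    · rw [mem_wds]; simp; omega
    · rw [mem_Wset]
      refine ⟨by simp; omega, fun j hj => ?_⟩
      rw [List.getElem?_drop]
      apply h2
      rw [add_assoc]
      exact Nat.dvd_add (dvd_refl r) hj
    · have h3 := h2 (r - 1) (by rw [Nat.sub_add_cancel hr])
      have h4 : r - 1 < w.length := by omega
      rw [List.getElem?_eq_getElem h4] at h3
      have h5 : w[r - 1] = false := by simpa using h3
      conv_rhs => rw [← List.take_append_drop (r - 1) w]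
      rw [List.drop_eq_getElem_cons h4, h5, Nat.sub_add_cancel hr]
  · rintro ⟨u, v, ⟨hu, hv⟩, rfl⟩
    rw [mem_wds] at hu
    rw [mem_Wset] at hv ⊢
    refine ⟨by simp [hu, hv.1, mul_add]; omega, fun j hj => ?_⟩
    have := Nat.le_of_dvd (by omega) hj
    rw [List.getElem?_append_right (by omega), hu]
    rcases Nat.eq_or_lt_of_le this with h | h
    · have : j - (r - 1) = 0 := by omega
      simp [this]
    · have h' : j - (r - 1) = (j - r) + 1 := by omega
      rw [h', List.getElem?_cons_succ]
      apply hv.2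
      have : j + 1 = r + (j - r + 1) := by omega
      rw [this] at hj
      exact (Nat.dvd_add_right (dvd_refl r)).1 hj

lemma prod_Wset_succ {M : Type*} [CommMonoid M] {r i : ℕ} (hr : 1 ≤ r) (hi : 1 ≤ i)
    (g : List Bool → M) :
    ∏ w ∈ Wset r (i + 1), g w = ∏ u ∈ wds (r - 1), ∏ w ∈ Wset r i, g (u ++ false :: w) := by
  rw [Wset_succ hr hi, Finset.prod_image, Finset.prod_product]
  rintro ⟨a, b⟩ h ⟨a', b'⟩ h' heq
  simp only [Finset.coe_product, Set.mem_prod, Finset.mem_coe, mem_wds] at h h'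
  have := List.append_inj heq (by simp [h.1, h'.1])
  simpa using this

lemma sum_Wset_succ {M : Type*} [AddCommMonoid M] {r i : ℕ} (hr : 1 ≤ r) (hi : 1 ≤ i)
    (g : List Bool → M) :
    ∑ w ∈ Wset r (i + 1), g w = ∑ u ∈ wds (r - 1), ∑ w ∈ Wset r i, g (u ++ false :: w) :=
  prod_Wset_succ (M := Multiplicative M) hr hi (fun w => Multiplicative.ofAdd (g w))

/-! ### The truncated invariants -/

/-- truncated `Q` -/
noncomputable def q (r j : ℕ) (e : Port) (x : List Bool) : ℤ :=
  ∑ i ∈ Finset.range j, 2 ^ (i + 1) * ∑ w ∈ Wset r (i + 1), ((e (x ++ w)).toNat : ℤ)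

/-- truncated `P` -/
noncomputable def p (r j : ℕ) (e : Port) (y : List Bool) : ℤ :=
  (-1) ^ (e y).toNat + q r j e (y ++ [true]) - q r j e (y ++ [false])

/-- `Q` on portraits -/
noncomputable def QQ (r : ℕ) (e : Port) (x : List Bool) : ℤ_[2] := Qr r e.act x
/-- `P` on portraits -/
noncomputable def PP (r : ℕ) (e : Port) (x : List Bool) : ℤ_[2] := Pr r e.act x

lemma PP_eq (r : ℕ) (e : Port) (x : List Bool) :
    PP r e x = (-1) ^ (e x).toNat + QQ r e (x ++ [true]) - QQ r e (x ++ [false]) := by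
  rw [PP, Pr, Port.par_act]; rfl

lemma q_zero (r : ℕ) (e : Port) (x : List Bool) : q r 0 e x = 0 := by simp [q]

lemma q_succ' (r j : ℕ) (e : Port) (x : List Bool) :
    q r (j + 1) e x = q r j e x +
      2 ^ (j + 1) * ∑ w ∈ Wset r (j + 1), ((e (x ++ w)).toNat : ℤ) := by
  simp [q, Finset.sum_range_succ]

lemma q_succ {r : ℕ} (hr : 1 ≤ r) (j : ℕ) (e : Port) (x : List Bool) :
    q r (j + 1) e x = 2 * ∑ u ∈ wds (r - 1),
      (((e (x ++ u)).toNat : ℤ) + q r j e (x ++ u ++ [false])) := by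
  rw [q, Finset.sum_range_succ', Finset.sum_add_distrib, mul_add, add_comm]
  congr 1
  · simp [Wset_one]
  · simp only [q]
    rw [Finset.sum_comm, Finset.mul_sum]
    refine Finset.sum_congr rfl fun i _ => ?_
    rw [sum_Wset_succ hr (by omega), pow_succ, mul_comm _ (2 : ℤ), mul_assoc, Finset.mul_sum]
    simp

lemma dvd_iff_zero {z : ℤ_[2]} (h : ∀ j : ℕ, (2 : ℤ_[2]) ^ (j + 1) ∣ z) : z = 0 := by
  by_contra hz
  have h2 : (2 : ℤ_[2]) = ((2 : ℕ) : ℤ_[2]) := by norm_num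
  have := h z.valuation
  rw [h2, ← PadicInt.norm_le_pow_iff_mem_span_pow z _ |>.trans Ideal.mem_span_singleton,
    PadicInt.norm_eq_zpow_neg_valuation hz] at this
  have h3 := (zpow_le_zpow_iff_right₀ (a := ((2 : ℕ) : ℝ)) (by norm_num)).1 this
  push_cast at h3
  omega

lemma summable_Q (r : ℕ) (e : Port) (x : List Bool) :
    Summable fun i : ℕ => (2:ℤ_[2])^(i+1) *
      ∑ w ∈ Wset r (i+1), (par e.act (x ++ w) : ℤ_[2]) := by
  refine Summable.of_norm_bounded (g := fun i : ℕ => (1/2 : ℝ) ^ (i + 1)) ?_ ?_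
  · exact (summable_nat_add_iff 1).2 (summable_geometric_of_lt_one (by norm_num) (by norm_num))
  · intro i
    rw [norm_mul, norm_pow]
    have h2 : ‖(2 : ℤ_[2])‖ = 1 / 2 := by
      have := PadicInt.norm_p (p := 2)
      norm_num at this ⊢; exact this
    rw [h2]
    exact mul_le_of_le_one_right (by positivity) (PadicInt.norm_le_one _)

lemma QQ_sub_q (r j : ℕ) (e : Port) (x : List Bool) :
    (2 : ℤ_[2]) ^ (j + 1) ∣ QQ r e x - q r j e x := by
  have hs := summable_Q r e x
  have h1 := hs.sum_add_tsum_nat_add j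
  rw [QQ, Qr, ← h1]
  have h2 : ((q r j e x : ℤ) : ℤ_[2]) = ∑ i ∈ Finset.range j, (2:ℤ_[2])^(i+1) *
      ∑ w ∈ Wset r (i+1), (par e.act (x ++ w) : ℤ_[2]) := by
    rw [q]; push_cast [Port.par_act]; rfl
  rw [h2, add_sub_cancel_left]
  have h3 : ∀ i : ℕ, (2:ℤ_[2])^(i+j+1) *
      ∑ w ∈ Wset r (i+j+1), (par e.act (x ++ w) : ℤ_[2]) =
      2 ^ (j + 1) * (2 ^ i * ∑ w ∈ Wset r (i+j+1), (par e.act (x ++ w) : ℤ_[2])) := by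
    intro i; ring
  simp_rw [h3]
  rw [Summable.tsum_mul_left]
  · exact dvd_mul_right _ _
  · refine Summable.of_norm_bounded (g := fun i : ℕ => (1/2 : ℝ) ^ i) ?_ ?_
    · exact (summable_geometric_of_lt_one (by norm_num) (by norm_num))
    · intro i
      rw [norm_mul, norm_pow]
      have h2 : ‖(2 : ℤ_[2])‖ = 1 / 2 := by
        have := PadicInt.norm_p (p := 2)
        norm_num at this ⊢; exact this
      rw [h2]
      exact mul_le_of_le_one_right (by positivity) (PadicInt.norm_le_one _)

lemma PP_sub_p (r j : ℕ) (e : Port) (y : List Bool) :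
    (2 : ℤ_[2]) ^ (j + 1) ∣ PP r e y - p r j e y := by
  have := dvd_sub (QQ_sub_q r j e (y ++ [true])) (QQ_sub_q r j e (y ++ [false]))
  convert this using 1
  rw [PP_eq, p]; push_cast; ring

lemma int_dvd_iff (n : ℕ) (z : ℤ) : (2 : ℤ_[2]) ^ n ∣ (z : ℤ_[2]) ↔ (2 : ℤ) ^ n ∣ z := by
  have := PadicInt.pow_p_dvd_int_iff (p := 2) n z
  push_cast at this
  exact this

lemma QQ_rec {r : ℕ} (hr : 1 ≤ r) (e : Port) (x : List Bool) :
    QQ r e x = 2 * ∑ u ∈ wds (r - 1),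
      (((e (x ++ u)).toNat : ℤ_[2]) + QQ r e (x ++ u ++ [false])) := by
  rw [← sub_eq_zero]
  apply dvd_iff_zero
  intro j
  have h1 := QQ_sub_q r (j + 1) e x
  have h2 : (2 : ℤ_[2]) ^ (j + 1) ∣ QQ r e x - q r (j + 1) e x :=
    (pow_dvd_pow 2 (by omega)).trans h1
  have h3 : (2 : ℤ_[2]) ^ (j + 1) ∣ 2 * ∑ u ∈ wds (r - 1),
      (((e (x ++ u)).toNat : ℤ_[2]) + QQ r e (x ++ u ++ [false])) - q r (j + 1) e x := by
    rw [q_succ hr]; push_cast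
    rw [← mul_sub, ← Finset.sum_sub_distrib]
    apply Dvd.dvd.mul_left
    apply Finset.dvd_sum
    intro u _
    rw [add_sub_add_left_eq_sub]
    exact QQ_sub_q r j e _
  have := dvd_sub h2 h3
  convert this using 1
  ring

lemma neg_one_pow_toNat {R : Type*} [CommRing R] (b : Bool) :
    (-1 : R) ^ b.toNat = 1 - 2 * (b.toNat : R) := by
  cases b <;> simp; norm_num

/-- the group `M` on portraits, as a set with prescribed value -/
def MP (r : ℕ) (c : ℤ_[2]) : Set Port := {e | ∀ x, PP r e x = c}

lemma QQ_mul {r : ℕ} (hr : 1 ≤ r) {c : ℤ_[2]} {e : Port} (he : e ∈ MP r c) (d : Port)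
    (x : List Bool) : QQ r (e * d) x = QQ r e (d.act x) + c * QQ r d x := by
  have key : ∀ j : ℕ, ∀ x, (2 : ℤ_[2]) ^ j ∣
      QQ r (e * d) x - (QQ r e (d.act x) + c * QQ r d x) := by
    intro j
    induction j with
    | zero => intro x; simp
    | succ j ih =>
      intro x
      rw [QQ_rec hr (e * d) x, QQ_rec hr e (d.act x), QQ_rec hr d x]
      rw [← sum_wds_act' (r - 1) d x
        (fun w => ((e w).toNat : ℤ_[2]) + QQ r e (w ++ [false]))]
      rw [mul_left_comm c, ← mul_add, ← mul_sub, pow_succ', Finset.mul_sum,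
        ← Finset.sum_add_distrib, ← Finset.sum_sub_distrib]
      refine mul_dvd_mul_left _ (Finset.dvd_sum fun u _ => ?_)
      have h1 := ih (x ++ u ++ [false])
      have h2 := he (d.act (x ++ u))
      rw [PP_eq, neg_one_pow_toNat] at h2
      convert h1 using 1
      rw [Port.act_snoc, Port.mul_apply]
      cases hd : d (x ++ u)
      · simp; ring
      · simp only [Bool.xor_true, Bool.not_false, Bool.true_xor, Bool.toNat_true]
        rw [← h2]
        cases he2 : e (d.act (x ++ u)) <;> simp <;> ring
  rw [← sub_eq_zero]
  exact dvd_iff_zero fun j => key (j + 1) x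

lemma PP_mul_apply {r : ℕ} (hr : 1 ≤ r) {c : ℤ_[2]} {e : Port} (he : e ∈ MP r c) (d : Port)
    (x : List Bool) : PP r (e * d) x = c * PP r d x := by
  rw [PP_eq, QQ_mul hr he, QQ_mul hr he, PP_eq r d, Port.act_snoc, Port.act_snoc,
    Port.mul_apply]
  have h2 := he (d.act x)
  rw [PP_eq] at h2
  rw [neg_one_pow_toNat] at *
  cases hdx : d x
  · simp only [Bool.xor_false, Bool.false_xor, Bool.toNat_false]
    rw [← h2]; simp; ring
  · simp only [Bool.xor_true, Bool.not_false, Bool.not_true, Bool.true_xor, Bool.toNat_true]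
    rw [← h2]
    cases he2 : e (d.act x) <;> simp <;> ring

lemma PP_mul {r : ℕ} (hr : 1 ≤ r) {c c' : ℤ_[2]} {e d : Port} (he : e ∈ MP r c)
    (hd : d ∈ MP r c') : e * d ∈ MP r (c * c') := by
  intro x
  rw [PP_mul_apply hr he, hd x]

lemma q_one (r j : ℕ) (x : List Bool) : q r j 1 x = 0 := by
  simp [q, Port.one_apply]

lemma QQ_one (r : ℕ) (x : List Bool) : QQ r 1 x = 0 := by
  refine dvd_iff_zero fun j => ?_
  have := QQ_sub_q r j 1 x
  simpa [q_one] using this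

lemma one_mem_MP (r : ℕ) : (1 : Port) ∈ MP r 1 := by
  intro x
  rw [PP_eq]; simp [QQ_one, Port.one_apply]

lemma MP_inv {r : ℕ} (hr : 1 ≤ r) {c : ℤ_[2]} {e : Port} (he : e ∈ MP r c) :
    ∃ c', c * c' = 1 ∧ e⁻¹ ∈ MP r c' := by
  have h : ∀ x, c * PP r e⁻¹ x = 1 := fun x => by
    rw [← PP_mul_apply hr he, mul_inv_cancel, one_mem_MP r x]
  refine ⟨PP r e⁻¹ [], h _, fun x => ?_⟩
  have hc : c ≠ 0 := by rintro rfl; simpa using h []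
  exact mul_left_cancel₀ hc ((h x).trans (h []).symm)

/-- the group `M` -/
def Mgrp (r : ℕ) (hr : 1 ≤ r) : Subgroup Port where
  carrier := {e | ∃ c, e ∈ MP r c}
  one_mem' := ⟨1, one_mem_MP r⟩
  mul_mem' := by
    rintro a b ⟨c, hc⟩ ⟨c', hc'⟩
    exact ⟨_, PP_mul hr hc hc'⟩
  inv_mem' := by
    rintro a ⟨c, hc⟩
    obtain ⟨c', -, h⟩ := MP_inv hr hc
    exact ⟨c', h⟩

lemma mem_Mgrp {r : ℕ} {hr : 1 ≤ r} {e : Port} : e ∈ Mgrp r hr ↔ ∃ c, e ∈ MP r c := Iff.rfl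

/-- the group `B` -/
def Bgrp (r : ℕ) (hr : 1 ≤ r) : Subgroup Port where
  carrier := MP r 1
  one_mem' := one_mem_MP r
  mul_mem' := by
    intro a b hc hc'
    simpa using PP_mul hr hc hc'
  inv_mem' := by
    intro a hc
    obtain ⟨c', h1, h⟩ := MP_inv hr hc
    rw [one_mul] at h1
    rwa [h1] at h

lemma mem_Bgrp {r : ℕ} {hr : 1 ≤ r} {e : Port} : e ∈ Bgrp r hr ↔ e ∈ MP r 1 := Iff.rfl

lemma Mset_iff {r : ℕ} (hr : 1 ≤ r) (σ : List Bool → List Bool) :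
    σ ∈ Mset r ↔ ∃ e ∈ Mgrp r hr, e.act = σ := by
  constructor
  · rintro ⟨h1, h2⟩
    obtain ⟨e, rfl⟩ := Port.exists_of_isTreeAut h1
    exact ⟨e, ⟨PP r e [], fun x => h2 x []⟩, rfl⟩
  · rintro ⟨e, ⟨c, hc⟩, rfl⟩
    exact ⟨Port.isTreeAut_act e, fun x y => (hc x).trans (hc y).symm⟩

lemma q_agr {r n j : ℕ} {e d : Port} (h : Port.agr n e d) {x : List Bool}
    (hx : x.length + r * j ≤ n) : (hr : 1 ≤ r) → q r j e x = q r j d x := by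
  intro hr
  unfold q
  refine Finset.sum_congr rfl fun i hi => ?_
  congr 1
  refine Finset.sum_congr rfl fun w hw => ?_
  rw [mem_Wset] at hw
  rw [Finset.mem_range] at hi
  have h1 : r * (i + 1) ≤ r * j := Nat.mul_le_mul_left r (by omega)
  have h2 : r ≤ r * (i + 1) := Nat.le_mul_of_pos_right r (by omega)
  rw [h _ (by simp [hw.1]; omega)]

lemma p_agr {r n j : ℕ} {e d : Port} (h : Port.agr n e d) {y : List Bool}
    (hy : y.length + r * j + 1 ≤ n) (hr : 1 ≤ r) : p r j e y = p r j d y := by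
  unfold p
  rw [q_agr h (by simp; omega) hr, q_agr h (by simp; omega) hr,
    h y (by omega)]

lemma QQ_agr {r n j : ℕ} {e d : Port} (h : Port.agr n e d) (hr : 1 ≤ r)
    (hx : r * j ≤ n) : (2 : ℤ_[2]) ^ (j + 1) ∣ QQ r e [] - QQ r d [] := by
  have h1 := dvd_sub (QQ_sub_q r j e []) (QQ_sub_q r j d [])
  rw [q_agr h (by simpa using hx) hr] at h1
  simpa using h1

lemma p_odd {r : ℕ} (e : Port) (y : List Bool) : (2 : ℤ) ∣ p r 0 e y - 1 := by
  unfold p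
  rw [q_zero, q_zero, neg_one_pow_toNat]
  exact ⟨-(e y).toNat, by push_cast; ring⟩

lemma p_succ (r j : ℕ) (e : Port) (y : List Bool) :
    p r (j + 1) e y = p r j e y + 2 ^ (j + 1) *
      (∑ w ∈ Wset r (j + 1), ((e (y ++ [true] ++ w)).toNat : ℤ) -
       ∑ w ∈ Wset r (j + 1), ((e (y ++ [false] ++ w)).toNat : ℤ)) := by
  unfold p
  rw [q_succ', q_succ']; ring

/-! ### Level parities -/

/-- the level parity -/
def psi (i : ℕ) (e : Port) : ZMod 2 := ∑ w ∈ wds i, ((e w).toNat : ZMod 2)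

lemma toNat_xor (a b : Bool) : ((xor a b).toNat : ZMod 2) = a.toNat + b.toNat := by
  cases a <;> cases b <;> simp; rfl

lemma psi_mul (i : ℕ) (e d : Port) : psi i (e * d) = psi i e + psi i d := by
  unfold psi
  simp_rw [Port.mul_apply, toNat_xor]
  rw [Finset.sum_add_distrib, add_comm]
  congr 1
  simpa using sum_wds_act' i d [] (fun w => ((e w).toNat : ZMod 2))

lemma psi_one (i : ℕ) : psi i 1 = 0 := by
  simp [psi, Port.one_apply]

lemma psi_inv (i : ℕ) (e : Port) : psi i e⁻¹ = psi i e := by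
  have := psi_mul i e e⁻¹
  rw [mul_inv_cancel, psi_one] at this
  have h2 : psi i e + psi i e = 0 := CharTwo.add_self_eq_zero _
  exact (add_left_cancel (h2.trans this)).symm

lemma psi_agr {i n : ℕ} (hi : i < n) {e d : Port} (h : Port.agr n e d) : psi i e = psi i d := by
  unfold psi
  refine Finset.sum_congr rfl fun w hw => ?_
  rw [mem_wds] at hw
  rw [h w (by omega)]

/-! ### Topological generators of `B` -/

/-- the generators (as functions on words) -/
def genF (r : ℕ) : ℕ → List Bool → Bool
  | 0, [] => true
  | _ + 1, [] => false
  | 0, false :: _ => false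
  | 0, true :: w => genF r (r - 1) w
  | i + 1, false :: w => genF r i w
  | _ + 1, true :: _ => false

/-- the generators -/
def gen (r i : ℕ) : Port := Port.ofFun (genF r i)

lemma gen_zero (r : ℕ) : gen r 0 = Port.pair true 1 (gen r (r - 1)) := by
  apply Port.ext
  rintro (_ | ⟨_ | _, w⟩) <;> simp [gen, genF, Port.one_apply]

lemma gen_succ (r i : ℕ) : gen r (i + 1) = Port.pair false (gen r i) 1 := by
  apply Port.ext
  rintro (_ | ⟨_ | _, w⟩) <;> simp [gen, genF, Port.one_apply]

lemma genF_len {r : ℕ} (hr : 1 ≤ r) (w : List Bool) : ∀ i, genF r i w = true →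
    ∃ t, w.length = i + r * t := by
  induction w with
  | nil =>
    intro i h
    cases i with
    | zero => exact ⟨0, by simp⟩
    | succ i => simp [genF] at h
  | cons s w ih =>
    intro i h
    cases i with
    | zero =>
      cases s with
      | false => simp [genF] at h
      | true =>
        obtain ⟨t, ht⟩ := ih _ h
        exact ⟨t + 1, by simp [ht, mul_add]; omega⟩
    | succ i =>
      cases s with
      | true => simp [genF] at h
      | false =>
        obtain ⟨t, ht⟩ := ih _ h
        exact ⟨t, by simp [ht]; omega⟩

lemma genF_get {r : ℕ} (w : List Bool) : ∀ i, genF r i w = true → i < w.length →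
    w[i]? = some true := by
  induction w with
  | nil => intro i h h2; simp at h2
  | cons s w ih =>
    intro i h h2
    cases i with
    | zero =>
      cases s with
      | false => simp [genF] at h
      | true => rfl
    | succ i =>
      cases s with
      | true => simp [genF] at h
      | false =>
        simp at h2
        simpa using ih _ h h2

lemma genF_small {r : ℕ} (i : ℕ) (w : List Bool) (hw : w.length < i) : genF r i w = false := by
  induction i generalizing w with
  | zero => simp at hw
  | succ i ih =>
    rcases w with _ | ⟨_ | _, w⟩
    · rfl
    · simp at hw; exact ih w hw
    · rfl

lemma sum_genF_self (r i : ℕ) : ∑ w ∈ wds i, ((genF r i w).toNat : ℤ) = 1 := by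
  induction i with
  | zero => simp [wds, genF]
  | succ i ih =>
    have := prod_wds_succ (M := Multiplicative ℤ) i
      (fun w => Multiplicative.ofAdd ((genF r (i+1) w).toNat : ℤ))
    have h2 : ∑ w ∈ wds (i + 1), ((genF r (i+1) w).toNat : ℤ) =
      ∑ w ∈ wds i, ((genF r (i+1) (false :: w)).toNat : ℤ) +
        ∑ w ∈ wds i, ((genF r (i+1) (true :: w)).toNat : ℤ) := this
    rw [h2]
    simp [genF, ih]

lemma psi_gen {r i j : ℕ} (hi : i < r) (hj : j < r) : psi j (gen r i) = if i = j then 1 else 0 := by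
  have h : psi j (gen r i) = ((∑ w ∈ wds j, ((genF r i w).toNat : ℤ) : ℤ) : ZMod 2) := by
    unfold psi; push_cast; rfl
  rw [h]
  split_ifs with hij
  · subst hij; rw [sum_genF_self]; simp
  · rw [Finset.sum_eq_zero]
    · simp
    · intro w hw
      rw [mem_wds] at hw
      cases hg : genF r i w
      · rfl
      · exfalso
        obtain ⟨t, ht⟩ := genF_len (by omega) w i hg
        rcases t with _ | t
        · omega
        · rw [mul_add] at ht; omega

lemma q_gen {r i : ℕ} (hi : i < r) (j : ℕ) :
    q r (j + 1) (gen r i) [] = if i + 1 = r then 2 else 0 := by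
  induction j with
  | zero =>
    rw [q_succ', q_zero, Wset_one]
    split_ifs with h
    · subst h
      have := sum_genF_self (i + 1) i
      simp [gen, this]
    · simp only [zero_add, pow_one, List.nil_append]
      rw [Finset.sum_eq_zero]
      · simp
      · intro w hw
        rw [mem_wds] at hw
        cases hg : genF r i w
        · simp [gen, hg]
        · exfalso
          obtain ⟨t, ht⟩ := genF_len (by omega) w i hg
          rcases t with _ | t
          · omega
          · rw [mul_add] at ht; omega
  | succ j ih =>
    rw [q_succ', ih, Finset.sum_eq_zero]
    · simp
    · intro w hw
      rw [mem_Wset] at hw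
      cases hg : genF r i w
      · simp [gen, hg]
      · exfalso
        obtain ⟨t, ht⟩ := genF_len (by omega) w i hg
        have h1 : i + 1 = r * (j + 1 + 1 - t) := by
          have : t ≤ j + 1 + 1 := by
            by_contra hh
            have h6 := Nat.mul_le_mul_left r (show j + 1 + 1 ≤ t by omega)
            have h7 := hw.1
            have h4 : r ≤ r * (j + 1 + 1) := Nat.le_mul_of_pos_right r (by omega)
            rw [ht] at h7
            generalize r * t = X at *
            generalize r * (j + 1 + 1) = Y at *
            omega
          rw [Nat.mul_sub]
          have h3 := Nat.mul_le_mul_left r this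
          have h4 : r ≤ r * (j + 1 + 1) := Nat.le_mul_of_pos_right r (by omega)
          omega
        have h2 : r ∣ i + 1 := ⟨_, h1⟩
        have h3 := Nat.le_of_dvd (by omega) h2
        have h5 : r * (j + 1 + 1) = r * j + 2 * r := by ring
        exact hw.2 i h2 (genF_get w i hg (by rw [hw.1]; omega))

lemma QQ_gen {r i : ℕ} (hi : i < r) :
    QQ r (gen r i) [] = if i + 1 = r then 2 else 0 := by
  rw [← sub_eq_zero]
  refine dvd_iff_zero fun j => ?_
  have := QQ_sub_q r (j + 1) (gen r i) []
  rw [q_gen hi] at this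
  have h2 := (pow_dvd_pow (2 : ℤ_[2]) (show j + 1 ≤ j + 1 + 1 by omega)).trans this
  split_ifs at h2 ⊢ <;> simpa using h2

lemma QQ_cons (r : ℕ) (e : Port) (s : Bool) (x : List Bool) :
    QQ r e (s :: x) = QQ r (e.sec1 s) x := by
  unfold QQ Qr
  simp_rw [Port.par_act]
  rfl

lemma PP_cons (r : ℕ) (e : Port) (s : Bool) (x : List Bool) :
    PP r e (s :: x) = PP r (e.sec1 s) x := by
  rw [PP_eq, PP_eq, List.cons_append, List.cons_append, QQ_cons, QQ_cons]
  rfl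

lemma pair_mem_MP {r : ℕ} {t : Bool} {g h : Port} :
    Port.pair t g h ∈ MP r 1 ↔ g ∈ MP r 1 ∧ h ∈ MP r 1 ∧
      QQ r h [] - QQ r g [] = 2 * (t.toNat : ℤ_[2]) := by
  have h0 : PP r (Port.pair t g h) [] = 1 - 2 * (t.toNat : ℤ_[2]) + QQ r h [] - QQ r g [] := by
    rw [PP_eq, neg_one_pow_toNat]
    simp only [List.nil_append]
    rw [QQ_cons, QQ_cons]
    rfl
  constructor
  · intro hm
    refine ⟨fun x => ?_, fun x => ?_, ?_⟩
    · have := hm (false :: x)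
      rwa [PP_cons] at this
    · have := hm (true :: x)
      rwa [PP_cons] at this
    · have := hm []
      rw [h0] at this
      linear_combination this
  · rintro ⟨h1, h2, h3⟩ x
    rcases x with _ | ⟨_ | _, x⟩
    · rw [h0]; linear_combination h3
    · rw [PP_cons]; exact h1 x
    · rw [PP_cons]; exact h2 x

lemma gen_mem {r : ℕ} {i : ℕ} (hi : i < r) : gen r i ∈ MP r 1 := by
  have key : ∀ (y : List Bool), ∀ i < r, PP r (gen r i) y = 1 := by
    intro y
    induction y with
    | nil =>
      intro i hi
      rw [PP_eq, List.nil_append, List.nil_append, QQ_cons, QQ_cons]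
      cases i with
      | zero =>
        rw [gen_zero]
        change (-1) ^ 1 + QQ r (gen r (r - 1)) [] - QQ r 1 [] = 1
        rw [QQ_gen (by omega), QQ_one, if_pos (by omega)]; norm_num
      | succ i =>
        rw [gen_succ]
        change (-1) ^ 0 + QQ r 1 [] - QQ r (gen r i) [] = 1
        rw [QQ_gen (by omega), QQ_one, if_neg (by omega)]; norm_num
    | cons s y ih =>
      intro i hi
      rw [PP_cons]
      cases i with
      | zero =>
        rw [gen_zero]
        cases s
        · exact one_mem_MP r y
        · exact ih (r - 1) (by omega)
      | succ i =>
        rw [gen_succ]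
        cases s
        · exact ih i (by omega)
        · exact one_mem_MP r y
  exact fun y => key y i hi

lemma pair_pow (g h : Port) (n : ℕ) :
    (Port.pair false g h) ^ n = Port.pair false (g ^ n) (h ^ n) := by
  induction n with
  | zero => simp [Port.pair_one]
  | succ n ih => rw [pow_succ, ih, Port.pair_mul_ff, pow_succ, pow_succ]

lemma gen_zero_sq (r : ℕ) : gen r 0 * gen r 0 = Port.pair false (gen r (r-1)) (gen r (r-1)) := by
  rw [gen_zero, Port.pair_mul_tt]; simp

lemma gen_pow_agr {r : ℕ} (hr : 1 ≤ r) (J : ℕ) : ∀ i, Port.agr (i + r * J) (gen r i ^ 2 ^ J) 1 := by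
  induction J with
  | zero =>
    intro i w hw
    simp at hw
    simp [gen, genF_small i w hw, Port.one_apply]
  | succ J ih =>
    intro i
    induction i with
    | zero =>
      have h := ih (r - 1)
      have h2 := Port.agr.pair false h h
      rw [← pair_pow, ← gen_zero_sq, ← sq, ← pow_mul, ← pow_succ', Port.pair_one] at h2
      exact h2.mono (by rw [mul_add]; omega)
    | succ i ih2 =>
      have h2 := Port.agr.pair false ih2 (Port.agr.refl _ 1)
      rw [Port.pair_one] at h2
      rw [gen_succ, pair_pow, one_pow]
      exact h2.mono (by omega)

/-- the discrete group generated by the generators -/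
def G0 (r : ℕ) : Subgroup Port := Subgroup.closure {e | ∃ i < r, e = gen r i}

lemma gen_mem_G0 {r i : ℕ} (hi : i < r) : gen r i ∈ G0 r :=
  Subgroup.subset_closure ⟨i, hi, rfl⟩

lemma G0_le {r : ℕ} (hr : 1 ≤ r) : G0 r ≤ Bgrp r hr := by
  rw [G0, Subgroup.closure_le]
  rintro _ ⟨i, hi, rfl⟩
  exact gen_mem hi

lemma G0_lift {r : ℕ} {g : Port} (hg : g ∈ G0 r) : ∃ h, Port.pair false g h ∈ G0 r := by
  unfold G0 at hg
  induction hg using Subgroup.closure_induction with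
  | mem x hx =>
    obtain ⟨i, hi, rfl⟩ := hx
    by_cases h : i + 1 < r
    · exact ⟨1, by rw [← gen_succ]; exact gen_mem_G0 h⟩
    · refine ⟨gen r (r - 1), ?_⟩
      have : i = r - 1 := by omega
      rw [this, ← gen_zero_sq]
      exact mul_mem (gen_mem_G0 (by omega)) (gen_mem_G0 (by omega))
  | one => exact ⟨1, by rw [Port.pair_one]; exact one_mem _⟩
  | mul x y _ _ hx hy =>
    obtain ⟨h, hh⟩ := hx
    obtain ⟨h', hh'⟩ := hy
    exact ⟨h * h', by rw [← Port.pair_mul_ff]; exact mul_mem hh hh'⟩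
  | inv x _ hx =>
    obtain ⟨h, hh⟩ := hx
    exact ⟨h⁻¹, by rw [← Port.pair_inv]; exact inv_mem hh⟩

/-- auxiliary normal subgroup -/
def N0 (r : ℕ) : Subgroup Port where
  carrier := {n | Port.pair false n 1 ∈ G0 r}
  one_mem' := by
    show Port.pair false 1 1 ∈ G0 r
    rw [Port.pair_one]; exact one_mem _
  mul_mem' := by
    intro a b ha hb
    have := mul_mem (show Port.pair false a 1 ∈ G0 r from ha) (show Port.pair false b 1 ∈ G0 r from hb)
    rw [Port.pair_mul_ff, mul_one] at this
    exact this
  inv_mem' := by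
    intro a ha
    have := inv_mem (show Port.pair false a 1 ∈ G0 r from ha)
    rw [Port.pair_inv, inv_one] at this
    exact this

lemma mem_N0 {r : ℕ} {n : Port} : n ∈ N0 r ↔ Port.pair false n 1 ∈ G0 r := Iff.rfl

lemma N0_conj {r : ℕ} {g n : Port} (hg : g ∈ G0 r) (hn : n ∈ N0 r) : g * n * g⁻¹ ∈ N0 r := by
  obtain ⟨h, hh⟩ := G0_lift hg
  have := mul_mem (mul_mem hh hn) (inv_mem hh)
  rw [Port.pair_inv, Port.pair_mul_ff, Port.pair_mul_ff] at this
  simpa [mem_N0] using this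

lemma N0_right {r : ℕ} (hr : 1 ≤ r) {n : Port} (hn : n ∈ N0 r) : Port.pair false 1 n ∈ G0 r := by
  have h1 : gen r 0 * Port.pair false n 1 = Port.pair false 1 n * gen r 0 := by
    rw [gen_zero, Port.pair_mul_ff, Port.pair_mul_tt]; simp
  have h2 : Port.pair false 1 n = gen r 0 * Port.pair false n 1 * (gen r 0)⁻¹ := by
    rw [h1]; simp
  rw [h2]
  exact mul_mem (mul_mem (gen_mem_G0 (by omega)) hn) (inv_mem (gen_mem_G0 (by omega)))

lemma G0_decomp {r : ℕ} (hr : 1 ≤ r) {g : Port} (hg : g ∈ G0 r) :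
    ∃ n ∈ N0 r, ∃ t : ℤ, g = n * gen r (r - 1) ^ t := by
  unfold G0 at hg
  have hl : gen r (r - 1) ∈ G0 r := gen_mem_G0 (by omega)
  induction hg using Subgroup.closure_induction with
  | mem x hx =>
    obtain ⟨i, hi, rfl⟩ := hx
    by_cases h : i + 1 < r
    · exact ⟨gen r i, by rw [mem_N0, ← gen_succ]; exact gen_mem_G0 h, 0, by simp⟩
    · have : i = r - 1 := by omega
      exact ⟨1, one_mem _, 1, by simp [this]⟩
  | one => exact ⟨1, one_mem _, 0, by simp⟩
  | mul x y _ _ hx hy =>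
    obtain ⟨n, hn, t, rfl⟩ := hx
    obtain ⟨n', hn', t', rfl⟩ := hy
    refine ⟨n * (gen r (r-1) ^ t * n' * (gen r (r-1) ^ t)⁻¹),
      mul_mem hn (N0_conj (zpow_mem hl t) hn'), t + t', ?_⟩
    rw [zpow_add]; group
  | inv x _ hx =>
    obtain ⟨n, hn, t, rfl⟩ := hx
    refine ⟨gen r (r-1) ^ (-t) * n⁻¹ * (gen r (r-1) ^ (-t))⁻¹,
      N0_conj (zpow_mem hl _) (inv_mem hn), -t, ?_⟩
    group

lemma QQ_mul_B {r : ℕ} (hr : 1 ≤ r) {e : Port} (he : e ∈ Bgrp r hr) (d : Port) :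
    QQ r (e * d) [] = QQ r e [] + QQ r d [] := by
  rw [QQ_mul hr (mem_Bgrp.1 he)]; simp

lemma QQ_zpow {r : ℕ} (hr : 1 ≤ r) {e : Port} (he : e ∈ Bgrp r hr) (t : ℤ) :
    QQ r (e ^ t) [] = t * QQ r e [] := by
  induction t using Int.induction_on with
  | zero => simp [QQ_one]
  | succ i ih =>
    rw [zpow_add_one, QQ_mul_B hr (zpow_mem he _), ih]; push_cast; ring
  | pred i ih =>
    have h := QQ_mul_B hr (zpow_mem he (-(i:ℤ) - 1)) e
    rw [← zpow_add_one, sub_add_cancel, ih] at h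
    push_cast at h ⊢
    linear_combination -h

/-- density of `G0` in `B` -/
lemma G0_dense {r : ℕ} (hr : 1 ≤ r) (n : ℕ) : ∀ e ∈ Bgrp r hr, ∃ g ∈ G0 r, Port.agr n e g := by
  induction n with
  | zero => intro e _; exact ⟨1, one_mem _, fun w hw => by omega⟩
  | succ n ih =>
    -- the case of trivial root action
    have main : ∀ g h : Port, Port.pair false g h ∈ Bgrp r hr →
        ∃ k ∈ G0 r, Port.agr (n + 1) (Port.pair false g h) k := by
      intro g h hgh
      obtain ⟨hg, hh, hQ⟩ := pair_mem_MP.1 (mem_Bgrp.1 hgh)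
      obtain ⟨g', hg', hag⟩ := ih g hg
      obtain ⟨h', hh'⟩ := G0_lift hg'
      have hB := mul_mem (inv_mem (G0_le hr hh')) hgh
      rw [Port.pair_inv, Port.pair_mul_ff] at hB
      obtain ⟨hg1, hh1, hQ1⟩ := pair_mem_MP.1 (mem_Bgrp.1 hB)
      have hag1 : Port.agr n (g'⁻¹ * g) 1 := by
        have := (Port.agr.refl n g'⁻¹).mul hag
        simpa using this
      set J := n / r with hJ
      have hJ1 : r * J ≤ n := Nat.mul_div_le n r
      have hJ2 : n < r * (J + 1) := Nat.lt_mul_div_succ n (by omega)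
      have hd1 := QQ_agr hag1 hr hJ1
      rw [QQ_one, sub_zero] at hd1
      obtain ⟨w, hw, haw⟩ := ih _ hh1
      have hd2 := QQ_agr haw hr hJ1
      obtain ⟨ν, hν, t, rfl⟩ := G0_decomp hr hw
      have hνB := pair_mem_MP.1 (mem_Bgrp.1 (G0_le hr (mem_N0.1 hν)))
      have hQν : QQ r ν [] = 0 := by
        have := hνB.2.2
        rw [QQ_one] at this
        simpa using this
      have hlB : gen r (r - 1) ∈ Bgrp r hr := gen_mem (by omega)
      rw [QQ_mul_B hr (show ν ∈ Bgrp r hr from hνB.1), hQν, zero_add, QQ_zpow hr hlB,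
        QQ_gen (by omega), if_pos (by omega)] at hd2
      simp only [Bool.toNat_false, Nat.cast_zero, mul_zero] at hQ1
      rw [sub_eq_zero] at hQ1
      rw [hQ1] at hd2
      have hd3 : (2 : ℤ_[2]) ^ (J + 1) ∣ ((t * 2 : ℤ) : ℤ_[2]) := by
        push_cast
        have := dvd_sub hd1 hd2
        simpa using this
      rw [int_dvd_iff, pow_succ] at hd3
      have hd4 : (2 : ℤ) ^ J ∣ t := Int.dvd_of_mul_dvd_mul_right (by norm_num) hd3
      obtain ⟨s, rfl⟩ := hd4
      have hpow : Port.agr n (gen r (r - 1) ^ ((2 : ℤ) ^ J * s)) 1 := by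
        have h1 : Port.agr n (gen r (r - 1) ^ 2 ^ J) 1 :=
          (gen_pow_agr hr J (r - 1)).mono (by rw [mul_add] at hJ2; omega)
        rw [zpow_mul]
        have h2 : gen r (r-1) ^ ((2 : ℤ) ^ J) = gen r (r-1) ^ 2 ^ J := by
          rw [← zpow_natCast]; push_cast; rfl
        rw [h2]
        have h3 : ∀ k : ℕ, Port.agr n ((gen r (r - 1) ^ 2 ^ J) ^ k) 1 := by
          intro k
          induction k with
          | zero => exact Port.agr.refl _ _
          | succ k ihk => rw [pow_succ]; simpa using ihk.mul h1
        obtain ⟨k, rfl | rfl⟩ := s.eq_nat_or_neg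
        · rw [zpow_natCast]; exact h3 k
        · rw [zpow_neg, zpow_natCast]; simpa using (h3 k).inv
      have haν : Port.agr n (h'⁻¹ * h) ν := by
        have := (Port.agr.refl n ν).mul hpow
        rw [mul_one] at this
        exact haw.trans this
      refine ⟨Port.pair false g' h' * Port.pair false 1 ν, mul_mem hh' (N0_right hr hν), ?_⟩
      have := (Port.agr.refl (n+1) (Port.pair false g' h')).mul (Port.agr.pair false hag1 haν)
      rw [Port.pair_mul_ff] at this
      simpa using this
    intro e he
    cases h0 : e []
    · have := main (e.sec1 false) (e.sec1 true)
      have hp := Port.pair_eta e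
      rw [h0] at hp
      rw [hp] at this
      exact this he
    · have hg0 : gen r 0 ∈ G0 r := gen_mem_G0 (by omega)
      have he' : (gen r 0)⁻¹ * e ∈ Bgrp r hr := mul_mem (inv_mem (G0_le hr hg0)) he
      set d := (gen r 0)⁻¹ * e with hd
      have hed : e = gen r 0 * d := by simp [hd]
      have hd0 : d [] = false := by
        have h1 : e [] = xor (d []) (gen r 0 (d.act [])) := by rw [hed, Port.mul_apply]
        rw [h0, Port.act_nil] at h1
        have h2 : gen r 0 [] = true := rfl
        rw [h2] at h1
        revert h1
        cases d [] <;> simp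
      have := main (d.sec1 false) (d.sec1 true)
      have hp := Port.pair_eta d
      rw [hd0] at hp
      rw [hp] at this
      obtain ⟨k, hk, hak⟩ := this he'
      refine ⟨gen r 0 * k, mul_mem hg0 hk, ?_⟩
      rw [hed]
      exact (Port.agr.refl _ _).mul hak

/-! ### Solving the level conditions -/

/-- sum of `g` over the set `A_y` -/
noncomputable def AS (r j : ℕ) (g : List Bool → ZMod 2) (y : List Bool) : ZMod 2 :=
  ∑ w ∈ Wset r j, (g (y ++ [false] ++ w) + g (y ++ [true] ++ w))

lemma AS_add (r j : ℕ) (g h : List Bool → ZMod 2) (y : List Bool) :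
    AS r j (fun v => g v + h v) y = AS r j g y + AS r j h y := by
  unfold AS
  rw [← Finset.sum_add_distrib]
  refine Finset.sum_congr rfl fun w _ => ?_
  ring

lemma dvd_of_eq_of {R : Type*} [CommRing R] {a b b' : R} (h : a ∣ b) (e : b' = b) : a ∣ b' := e ▸ h

lemma zmod2_cases (z : ZMod 2) : z = 0 ∨ z = 1 := by
  revert z; decide

/-- condition on `Z` -/
def ZOK (r : ℕ) (Z : List Bool → Prop) : Prop :=
  ∀ (y : List Bool) (j : ℕ), 1 ≤ j → (∃ s, ∃ w ∈ Wset r j, Z (y ++ [s] ++ w)) →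
    ∃ w ∈ Wset r j, Z (y ++ [true] ++ w)

lemma lemmaA {r : ℕ} (hr : 1 ≤ r) (m : ℕ) (Z : List Bool → Prop)
    (hZ : ∀ (y : List Bool) (j : ℕ), 1 ≤ j → y.length + r * j = m →
      (∃ s, ∃ w ∈ Wset r j, Z (y ++ [s] ++ w)) → ∃ w ∈ Wset r j, Z (y ++ [true] ++ w))
    (t : ℕ → List Bool → ZMod 2) :
    ∃ δ : List Bool → Bool, (∀ v, δ v = true → Z v ∧ v.length = m) ∧
      ∀ (y : List Bool) (j : ℕ), 1 ≤ j → y.length + r * j = m →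
        (∃ s, ∃ w ∈ Wset r j, Z (y ++ [s] ++ w)) →
        AS r j (fun v => ((δ v).toNat : ZMod 2)) y = t j y := by
  classical
  have key : ∀ i : ℕ, ∃ δ : List Bool → Bool, (∀ v, δ v = true → Z v ∧ v.length = m) ∧
      ∀ (y : List Bool) (j : ℕ), 1 ≤ j → m + 1 ≤ i + j → y.length + r * j = m →
        (∃ s, ∃ w ∈ Wset r j, Z (y ++ [s] ++ w)) →
        AS r j (fun v => ((δ v).toNat : ZMod 2)) y = t j y := by
    intro i
    induction i with
    | zero =>
      refine ⟨fun _ => false, by simp, fun y j h1 h2 h3 => ?_⟩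
      have : j ≤ r * j := Nat.le_mul_of_pos_left j (by omega)
      omega
    | succ i ih =>
      obtain ⟨δ, hδ, hs⟩ := ih
      by_cases hi : m ≤ i
      · refine ⟨δ, hδ, fun y j h1 h2 h3 h4 => hs y j h1 (by omega) h3 h4⟩
      have hi' : i < m := by omega
      obtain ⟨J, hJ⟩ : ∃ J, J + i = m := ⟨m - i, by omega⟩
      have hJ1 : 1 ≤ J := by omega
      have hch : ∀ y : List Bool, ∃ w, y.length + r * J = m →
          (∃ s, ∃ w ∈ Wset r J, Z (y ++ [s] ++ w)) → w ∈ Wset r J ∧ Z (y ++ [true] ++ w) := by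
        intro y
        by_cases h : y.length + r * J = m ∧ (∃ s, ∃ w ∈ Wset r J, Z (y ++ [s] ++ w))
        · obtain ⟨w, hw⟩ := hZ y J hJ1 h.1 h.2
          exact ⟨w, fun _ _ => hw⟩
        · exact ⟨[], fun h1 h2 => absurd ⟨h1, h2⟩ h⟩
      choose W hW using hch
      set E : List Bool → Prop := fun v => ∃ y : List Bool, y.length + r * J = m ∧
        (∃ s, ∃ w ∈ Wset r J, Z (y ++ [s] ++ w)) ∧
        AS r J (fun v => ((δ v).toNat : ZMod 2)) y ≠ t J y ∧ v = y ++ [true] ++ W y with hE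
      refine ⟨fun v => xor (δ v) (decide (E v)), ?_, ?_⟩
      · intro v hv
        by_cases h : δ v = true
        · exact hδ v h
        · have hEv : E v := by
            simp only [Bool.not_eq_true] at h
            simpa [h] using hv
          obtain ⟨y, hy1, hy2, hy3, rfl⟩ := hEv
          obtain ⟨h5, h6⟩ := hW y hy1 hy2
          refine ⟨h6, ?_⟩
          rw [mem_Wset] at h5
          have : r ≤ r * J := Nat.le_mul_of_pos_right r hJ1
          simp [h5.1]; omega
      · intro y j hj1 hj2 hj3 hj4
        have hsplit : AS r j (fun v => ((xor (δ v) (decide (E v))).toNat : ZMod 2)) y =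
            AS r j (fun v => ((δ v).toNat : ZMod 2)) y +
              AS r j (fun v => ((decide (E v)).toNat : ZMod 2)) y := by
          rw [← AS_add]
          congr 1
          funext v
          exact toNat_xor _ _
        rw [hsplit]
        by_cases hjJ : j = J
        · subst hjJ
          have hF : ∀ w ∈ Wset r j, ¬ E (y ++ [false] ++ w) := by
            rintro w hw ⟨y', h1, h2, h3, h4⟩
            rw [List.append_assoc, List.append_assoc] at h4
            obtain ⟨h5, h6⟩ := List.append_inj h4 (by omega)
            simp at h6
          have hT : ∀ w ∈ Wset r j, E (y ++ [true] ++ w) ↔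
              w = W y ∧ AS r j (fun v => ((δ v).toNat : ZMod 2)) y ≠ t j y := by
            intro w hw
            constructor
            · rintro ⟨y', h1, h2, h3, h4⟩
              rw [List.append_assoc, List.append_assoc] at h4
              obtain ⟨h5, h6⟩ := List.append_inj h4 (by omega)
              subst h5
              simp at h6
              exact ⟨h6, h3⟩
            · rintro ⟨rfl, h⟩
              exact ⟨y, hj3, hj4, h, rfl⟩
          have hEs : AS r j (fun v => ((decide (E v)).toNat : ZMod 2)) y =
              if AS r j (fun v => ((δ v).toNat : ZMod 2)) y ≠ t j y then 1 else 0 := by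
            conv_lhs => unfold AS
            have : ∀ w ∈ Wset r j, (((decide (E (y ++ [false] ++ w))).toNat : ZMod 2) +
                ((decide (E (y ++ [true] ++ w))).toNat : ZMod 2)) =
                if w = W y then
                  (if AS r j (fun v => ((δ v).toNat : ZMod 2)) y ≠ t j y then 1 else 0) else 0 := by
              intro w hw
              have h1 := hF w hw
              have h2 := hT w hw
              simp only [h1, h2]
              by_cases h3 : w = W y <;> by_cases h4 : AS r j (fun v => ((δ v).toNat : ZMod 2)) y ≠ t j y <;>
                simp [h3, h4]
            rw [Finset.sum_congr rfl this, Finset.sum_ite_eq' (Wset r j) (W y), if_pos (hW y hj3 hj4).1]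
          rw [hEs]
          split_ifs with h
          · rcases zmod2_cases (AS r j (fun v => ((δ v).toNat : ZMod 2)) y) with h1 | h1 <;>
            rcases zmod2_cases (t j y) with h2 | h2 <;> rw [h1, h2] at h ⊢
            · exact absurd rfl h
            · decide
            · decide
            · exact absurd rfl h
          · push Not at h
            rw [h, add_zero]
        · have hjJ' : J < j := by omega
          have hno : ∀ s, ∀ w ∈ Wset r j, ¬ E (y ++ [s] ++ w) := by
            rintro s w hw ⟨y', h1, h2, h3, h4⟩
            rw [mem_Wset] at hw
            have hlen : y'.length = y.length + r * (j - J) := by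
              rw [Nat.mul_sub]
              have := Nat.mul_le_mul_left r hjJ'.le
              omega
            have hpos : 1 ≤ r * (j - J) := Nat.mul_pos (by omega) (by omega)
            have h6 := congrArg (fun l => l[y'.length]?) h4
            beta_reduce at h6
            have h7 : (y' ++ [true] ++ W y')[y'.length]? = some true := by
              rw [List.append_assoc, List.getElem?_append_right (by omega)]
              simp
            have h8 : (y ++ [s] ++ w)[y'.length]? = w[r * (j - J) - 1]? := by
              rw [List.getElem?_append_right (by simp; omega)]
              congr 1
              simp; omega
            rw [h7, h8] at h6
            refine hw.2 (r * (j - J) - 1) ?_ h6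
            rw [Nat.sub_add_cancel hpos]
            exact dvd_mul_right _ _
          have hEs : AS r j (fun v => ((decide (E v)).toNat : ZMod 2)) y = 0 := by
            conv_lhs => unfold AS
            refine Finset.sum_eq_zero fun w hw => ?_
            have h1 := hno false w hw
            have h2 := hno true w hw
            beta_reduce
            rw [decide_eq_false h1, decide_eq_false h2]
            simp
          rw [hEs, add_zero]
          exact hs y j hj1 (by omega) hj3 hj4
  obtain ⟨δ, hδ, hs⟩ := key (m + 1)
  exact ⟨δ, hδ, fun y j h1 h2 h3 => hs y j h1 (by omega) h2 h3⟩

lemma solve {r : ℕ} (hr : 1 ≤ r) (m : ℕ) (Z : List Bool → Prop)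
    (hZ : ∀ (y : List Bool) (j : ℕ), 1 ≤ j → y.length + r * j = m →
      (∃ s, ∃ w ∈ Wset r j, Z (y ++ [s] ++ w)) → ∃ w ∈ Wset r j, Z (y ++ [true] ++ w))
    (e : Port) (c : ℕ → ℤ) (hc : ∀ j, (2 : ℤ) ^ (j + 1) ∣ c (j + 1) - c j)
    (hprev : ∀ (y : List Bool) (j : ℕ), y.length + r * j < m → (2 : ℤ) ^ (j + 1) ∣ p r j e y - c j) :
    ∃ e' : Port, (∀ v, e' v ≠ e v → Z v ∧ v.length = m) ∧
      ∀ (y : List Bool) (j : ℕ), 1 ≤ j → y.length + r * j = m →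
        (∃ s, ∃ w ∈ Wset r j, Z (y ++ [s] ++ w)) → (2 : ℤ) ^ (j + 1) ∣ p r j e' y - c j := by
  obtain ⟨δ, hδ, hs⟩ := lemmaA hr m Z hZ (fun j y =>
    (((c j - p r (j - 1) e y) / 2 ^ j : ℤ) : ZMod 2) + AS r j (fun v => ((e v).toNat : ZMod 2)) y)
  refine ⟨Port.ofFun fun v => xor (e v) (δ v), ?_, ?_⟩
  · intro v hv
    apply hδ
    rw [Port.ofFun_apply] at hv
    cases h : δ v
    · rw [h] at hv; simp at hv
    · rfl
  · intro y j hj1 hj2 hj3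
    obtain ⟨j, rfl⟩ : ∃ i, j = i + 1 := ⟨j - 1, by omega⟩
    have h1 := hs y (j + 1) hj1 hj2 hj3
    simp only [Nat.add_sub_cancel] at h1
    set e' := Port.ofFun fun v => xor (e v) (δ v) with he'
    have hagr : Port.agr m e' e := by
      intro v hv
      rw [he', Port.ofFun_apply]
      cases h : δ v
      · simp
      · have := (hδ v h).2; omega
    have hpe : p r j e' y = p r j e y := p_agr hagr (by rw [mul_add] at hj2; omega) hr
    have hlt : y.length + r * j < m := by rw [mul_add] at hj2; omega
    have hd : (2 : ℤ) ^ (j + 1) ∣ c (j + 1) - p r j e y := by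
      have := dvd_sub (hc j) (hprev y j hlt)
      exact dvd_of_eq_of this (by ring)
    obtain ⟨d, hd⟩ := hd
    rw [hd, Int.mul_ediv_cancel_left _ (by positivity)] at h1
    have hsplit : AS r (j+1) (fun v => ((e' v).toNat : ZMod 2)) y =
        AS r (j+1) (fun v => ((e v).toNat : ZMod 2)) y +
          AS r (j+1) (fun v => ((δ v).toNat : ZMod 2)) y := by
      rw [← AS_add]
      congr 1
      funext v
      exact toNat_xor _ _
    rw [h1, add_left_comm, CharTwo.add_self_eq_zero, add_zero] at hsplit
    rw [p_succ, hpe]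
    set T := ∑ w ∈ Wset r (j + 1), ((e' (y ++ [true] ++ w)).toNat : ℤ)
    set F := ∑ w ∈ Wset r (j + 1), ((e' (y ++ [false] ++ w)).toNat : ℤ)
    have hAS : AS r (j+1) (fun v => ((e' v).toNat : ZMod 2)) y = ((T + F : ℤ) : ZMod 2) := by
      unfold AS T F
      rw [Finset.sum_add_distrib, add_comm]
      push_cast
      rfl
    rw [hAS] at hsplit
    have h2 : ((T - F - d : ℤ) : ZMod 2) = 0 := by
      have h3 : ((T + F : ℤ) : ZMod 2) = ((T - F : ℤ) : ZMod 2) := by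
        push_cast; rw [CharTwo.sub_eq_add]
      rw [h3] at hsplit
      push_cast at hsplit ⊢
      rw [hsplit, sub_self]
    rw [ZMod.intCast_zmod_eq_zero_iff_dvd] at h2
    obtain ⟨a, ha⟩ := h2
    refine ⟨a, ?_⟩
    have hp : p r j e y = c (j + 1) - 2 ^ (j + 1) * d := by linear_combination -hd
    push_cast at ha
    rw [hp, pow_succ 2 (j+1)]
    linear_combination 2 ^ (j + 1) * ha

lemma exists_approx (P : ℤ_[2]) : ∃ c : ℕ → ℤ, (∀ j, (2 : ℤ_[2]) ^ (j + 1) ∣ P - c j) ∧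
    ∀ j, (2 : ℤ) ^ (j + 1) ∣ c (j + 1) - c j := by
  have h1 : ∀ j, (2 : ℤ_[2]) ^ (j + 1) ∣ P - ((P.appr (j + 1) : ℤ) : ℤ_[2]) := by
    intro j
    have := PadicInt.appr_spec (j + 1) P
    rw [Ideal.mem_span_singleton] at this
    exact_mod_cast this
  refine ⟨fun j => (P.appr (j + 1) : ℤ), h1, fun j => ?_⟩
  rw [← int_dvd_iff]
  have h2 := (pow_dvd_pow (2 : ℤ_[2]) (show j + 1 ≤ j + 1 + 1 by omega)).trans (h1 (j + 1))
  have := dvd_sub (h1 j) h2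
  push_cast at this ⊢
  convert this using 1; ring

lemma dvd_of_p {r : ℕ} {e : Port} {y : List Bool} {P : ℤ_[2]} {c : ℕ → ℤ}
    (hc : ∀ j, (2 : ℤ_[2]) ^ (j + 1) ∣ P - c j)
    (h : ∀ j, (2 : ℤ) ^ (j + 1) ∣ p r j e y - c j) : PP r e y = P := by
  rw [← sub_eq_zero]
  refine dvd_iff_zero fun j => ?_
  have h1 := PP_sub_p r j e y
  have h2 := (int_dvd_iff _ _).2 (h j)
  have := dvd_sub (dvd_add h1 h2) (hc j)
  convert this using 1
  push_cast; ring

/-- `e ∈ M` as soon as it satisfies a coherent system of congruences -/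
lemma mem_Mgrp_of_p {r : ℕ} (hr : 1 ≤ r) {e : Port} {c : ℕ → ℤ}
    (h : ∀ y j, (2 : ℤ) ^ (j + 1) ∣ p r j e y - c j) : e ∈ Mgrp r hr := by
  refine ⟨PP r e [], fun y => ?_⟩
  rw [← sub_eq_zero]
  refine dvd_iff_zero fun j => ?_
  have h1 := PP_sub_p r j e y
  have h2 := (int_dvd_iff _ _).2 (h y j)
  have h3 := PP_sub_p r j e []
  have h4 := (int_dvd_iff _ _).2 (h [] j)
  have := dvd_sub (dvd_add h1 h2) (dvd_add h3 h4)
  convert this using 1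
  push_cast; ring

lemma c_zero_odd {P : ℤ_[2]} (hP : (2 : ℤ_[2]) ∣ P - 1) {c : ℕ → ℤ}
    (hc : ∀ j, (2 : ℤ_[2]) ^ (j + 1) ∣ P - c j) : (2 : ℤ) ∣ c 0 - 1 := by
  have h := hc 0
  rw [zero_add, pow_one] at h
  have := dvd_sub hP h
  have h2 : (2 : ℤ_[2]) ^ 1 ∣ ((c 0 - 1 : ℤ) : ℤ_[2]) := by
    rw [pow_one]; convert this using 1; push_cast; ring
  rw [int_dvd_iff] at h2
  simpa using h2

lemma exists_MP {r : ℕ} (hr : 1 ≤ r) (e0 : Port) {P : ℤ_[2]} (hP : (2 : ℤ_[2]) ∣ P - 1) :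
    ∃ e ∈ MP r P, Port.agr r e e0 := by
  obtain ⟨c, hc1, hc2⟩ := exists_approx P
  have hc0 := c_zero_odd hP hc1
  have hj0 : ∀ (e : Port) (y : List Bool), (2 : ℤ) ^ (0 + 1) ∣ p r 0 e y - c 0 := by
    intro e y
    have := dvd_sub (p_odd (r := r) e y) hc0
    exact dvd_of_eq_of this (by ring)
  suffices hb : ∃ e : Port, ∀ m, ((∀ w : List Bool, w.length = m → m < r → e w = e0 w) ∧
    ∀ (y : List Bool) (j : ℕ), y.length + r * j = m → (2 : ℤ) ^ (j + 1) ∣ p r j e y - c j) by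
    obtain ⟨e, he⟩ := hb
    refine ⟨e, fun y => dvd_of_p hc1 fun j => (he _).2 y j rfl, fun w hw => (he _).1 w rfl hw⟩
  refine build_port (fun m e => (∀ w : List Bool, w.length = m → m < r → e w = e0 w) ∧
    ∀ (y : List Bool) (j : ℕ), y.length + r * j = m → (2 : ℤ) ^ (j + 1) ∣ p r j e y - c j) ?_ ?_
  · rintro m e e' h ⟨h1, h2⟩
    refine ⟨fun w hw hm => by rw [← h w hw.le]; exact h1 w hw hm, fun y j hy => ?_⟩
    have hag : Port.agr (m + 1) e e' := fun w hw => h w (by omega)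
    rw [← p_agr hag (by omega) hr]
    exact h2 y j hy
  · intro m e hprev
    by_cases hm : m < r
    · refine ⟨Port.ofFun fun w => if w.length = m then e0 w else e w, ?_, ?_, ?_⟩
      · intro w hw
        rw [Port.ofFun_apply, if_neg (by omega)]
      · intro w hw _
        rw [Port.ofFun_apply, if_pos hw]
      · intro y j hy
        cases j with
        | zero => exact hj0 _ _
        | succ j => rw [mul_add] at hy; omega
    · obtain ⟨e', h1, h2⟩ := solve hr m (fun _ => True) (by
        rintro y j hj _ ⟨s, w, hw, _⟩
        exact ⟨w, hw, trivial⟩) e c hc2 (fun y j hlt => (hprev _ hlt).2 y j rfl)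
      refine ⟨e', ?_, ?_, ?_⟩
      · intro w hw
        by_contra hne
        have := (h1 w hne).2
        omega
      · intro w _ h; exact absurd h hm
      · intro y j hy
        cases j with
        | zero => exact hj0 _ _
        | succ j =>
          refine h2 y (j + 1) (by omega) hy ⟨false, List.replicate (r * (j + 1) - 1) false, ?_, trivial⟩
          rw [mem_Wset]
          refine ⟨by simp, fun i _ h => ?_⟩
          rw [List.getElem?_replicate] at h
          split_ifs at h
          simp at h

/-! ### A Frattini argument -/

lemma norm_of_dvd {n : ℕ} {z : ℤ_[2]} : (2 : ℤ_[2]) ^ n ∣ z ↔ ‖z‖ ≤ (2 : ℝ) ^ (-n : ℤ) := by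
  have := PadicInt.norm_le_pow_iff_mem_span_pow z n
  rw [Ideal.mem_span_singleton] at this
  push_cast at this
  exact this.symm

lemma exists_sq {P : ℤ_[2]} (hP : (8 : ℤ_[2]) ∣ P - 1) : ∃ s : ℤ_[2], s * s = P ∧ (2 : ℤ_[2]) ∣ s - 1 := by
  have h8 : ‖P - 1‖ ≤ 1 / 8 := by
    have : (2 : ℤ_[2]) ^ 3 ∣ P - 1 := by norm_num; exact hP
    rw [norm_of_dvd] at this
    norm_num at this ⊢
    exact this
  have h2 : ‖(2 : ℤ_[2])‖ = 1 / 2 := by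
    have := PadicInt.norm_p (p := 2)
    push_cast at this
    rw [this]; norm_num
  have hder : (derivative (X ^ 2 - C P : Polynomial ℤ_[2])).aeval (1 : ℤ_[2]) = 2 := by
    simp
    norm_num
  have hev : (X ^ 2 - C P : Polynomial ℤ_[2]).aeval (1 : ℤ_[2]) = -(P - 1) := by
    simp
  obtain ⟨s, hs1, hs2, -⟩ := hensels_lemma (p := 2) (F := (X ^ 2 - C P : Polynomial ℤ_[2]))
    (a := (1 : ℤ_[2])) (by
      rw [hder, hev, norm_neg, h2]
      refine lt_of_le_of_lt h8 (by norm_num))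
  refine ⟨s, ?_, ?_⟩
  · have h : s ^ 2 - P = 0 := by simpa using hs1
    linear_combination h
  · rw [hder, h2] at hs2
    have h3 : (2 : ℤ_[2]) ^ 1 ∣ s - 1 := by
      rw [norm_of_dvd]
      norm_num
      linarith
    simpa using h3

lemma agr_sq {n : ℕ} {e : Port} (h : Port.agr n e 1) : Port.agr (n + 1) (e * e) 1 := by
  intro w hw
  rw [Port.mul_apply, h.act_eq (show w.length ≤ n by omega), Port.act_one, Port.one_apply]
  simp

lemma agr_pow (e : Port) (n : ℕ) : Port.agr n (e ^ 2 ^ n) 1 := by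
  induction n with
  | zero => intro w hw; omega
  | succ n ih =>
    have := agr_sq ih
    rwa [← pow_two, ← pow_mul, ← pow_succ] at this

/-- congruence subgroup -/
def Kgrp (r : ℕ) (hr : 1 ≤ r) (n : ℕ) : Subgroup (Mgrp r hr) where
  carrier := {e | Port.agr n e.1 1}
  one_mem' := Port.agr.refl n 1
  mul_mem' := by
    intro a b ha hb
    have := Port.agr.mul (show Port.agr n a.1 1 from ha) (show Port.agr n b.1 1 from hb)
    rw [mul_one] at this
    exact this
  inv_mem' := by
    intro a ha
    have := Port.agr.inv (show Port.agr n a.1 1 from ha)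
    rw [inv_one] at this
    exact this

lemma mem_Kgrp {r : ℕ} {hr : 1 ≤ r} {n : ℕ} {e : Mgrp r hr} : e ∈ Kgrp r hr n ↔ Port.agr n e.1 1 :=
  Iff.rfl

instance Kgrp_normal (r : ℕ) (hr : 1 ≤ r) (n : ℕ) : (Kgrp r hr n).Normal where
  conj_mem := by
    intro a ha g
    have h1 := Port.agr.mul (Port.agr.mul (Port.agr.refl n g.1) (mem_Kgrp.1 ha))
      (Port.agr.refl n g.1⁻¹)
    rw [mul_one, mul_inv_cancel] at h1
    exact h1

lemma agr_iff_Kgrp {r : ℕ} {hr : 1 ≤ r} {n : ℕ} {a b : Mgrp r hr} :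
    a⁻¹ * b ∈ Kgrp r hr n ↔ Port.agr n a.1 b.1 := by
  rw [mem_Kgrp]
  constructor
  · intro h
    have := (Port.agr.refl n a.1).mul h
    simp at this
    exact this.symm
  · intro h
    have := (Port.agr.refl n a.1⁻¹).mul h
    simp at this
    exact this.symm

instance finite_words (n : ℕ) : Finite {w : List Bool // w.length < n} :=
  (List.finite_length_lt Bool n).to_subtype

instance Kgrp_finite (r : ℕ) (hr : 1 ≤ r) (n : ℕ) : Finite (Mgrp r hr ⧸ Kgrp r hr n) := by
  refine Finite.of_injective
    (fun (a : Mgrp r hr ⧸ Kgrp r hr n) (w : {w : List Bool // w.length < n}) => a.out.1 w.1) ?_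
  intro a b hab
  rw [← QuotientGroup.out_eq' a, ← QuotientGroup.out_eq' b, QuotientGroup.eq, agr_iff_Kgrp]
  intro w hw
  exact congrFun hab ⟨w, hw⟩

lemma Kgrp_pgroup (r : ℕ) (hr : 1 ≤ r) (n : ℕ) : IsPGroup 2 (Mgrp r hr ⧸ Kgrp r hr n) := by
  intro a
  refine ⟨n, ?_⟩
  induction a using QuotientGroup.induction_on with
  | H z =>
    rw [← QuotientGroup.mk_pow, QuotientGroup.eq_one_iff]
    exact agr_pow z.1 n

lemma index_two_ker {r : ℕ} (hr : 1 ≤ r) {n : ℕ} {H : Subgroup (Mgrp r hr)} (hH : H.index = 2)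
    (hK : Kgrp r hr n ≤ H) {τ : Mgrp r hr} (hpsi : ∀ i < r, psi i τ.1 = 0)
    (hP : (8 : ℤ_[2]) ∣ PP r τ.1 [] - 1) : τ ∈ H := by
  classical
  obtain ⟨P, hτP⟩ := τ.2
  rw [hτP []] at hP
  obtain ⟨s, hs, hs1⟩ := exists_sq hP
  obtain ⟨τ', hτ', -⟩ := exists_MP hr 1 hs1
  let T : Mgrp r hr := ⟨τ', s, hτ'⟩
  have hTT : T * T ∈ H := by
    rw [Subgroup.mul_mem_iff_of_index_two hH]
  set b : Mgrp r hr := (T * T)⁻¹ * τ with hb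
  have hτb : τ = T * T * b := by rw [hb, mul_inv_cancel_left]
  have hbB : b.1 ∈ MP r 1 := by
    intro x
    have h1 := PP_mul_apply hr (PP_mul hr hτ' hτ') b.1 x
    have h2 : τ' * τ' * b.1 = τ.1 := by rw [hτb]; rfl
    rw [h2, hτP x, hs] at h1
    have hP0 : P ≠ 0 := by
      rintro rfl
      have h8 : (2 : ℤ_[2]) ^ 3 ∣ ((-1 : ℤ) : ℤ_[2]) := by norm_num; simpa using hP
      rw [int_dvd_iff] at h8
      norm_num at h8
    have h3 : P * PP r b.1 x = P * 1 := by rw [mul_one]; exact h1.symm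
    exact mul_left_cancel₀ hP0 h3
  have hbpsi : ∀ i < r, psi i b.1 = 0 := by
    intro i hi
    have : psi i τ.1 = psi i τ' + psi i τ' + psi i b.1 := by
      rw [← psi_mul, ← psi_mul, hτb]; rfl
    rw [hpsi i hi, CharTwo.add_self_eq_zero, zero_add] at this
    exact this.symm
  rw [hτb]
  refine mul_mem hTT ?_
  obtain ⟨g, hg, hag⟩ := G0_dense hr (max n r) b.1 hbB
  have hgM : ∀ {x}, x ∈ G0 r → x ∈ Mgrp r hr := fun hx => ⟨1, G0_le hr hx⟩
  set χ : Mgrp r hr → ZMod 2 := fun x => if x ∈ H then 0 else 1 with hχ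
  have hχmul : ∀ x y, χ (x * y) = χ x + χ y := by
    intro x y
    simp only [hχ, Subgroup.mul_mem_iff_of_index_two hH]
    by_cases h1 : x ∈ H <;> by_cases h2 : y ∈ H <;> simp [h1, h2]
    decide
  have hχinv : ∀ x, χ x⁻¹ = χ x := by
    intro x
    simp only [hχ, inv_mem_iff]
  have hχgen : ∀ x (hx : x ∈ G0 r), χ ⟨x, hgM hx⟩ =
      ∑ i : Fin r, psi i x * χ ⟨gen r i, hgM (gen_mem_G0 i.2)⟩ := by
    intro x hx
    unfold G0 at hx
    induction hx using Subgroup.closure_induction with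
    | mem x hx =>
      obtain ⟨i, hi, rfl⟩ := hx
      rw [Finset.sum_eq_single (⟨i, hi⟩ : Fin r)]
      · rw [psi_gen hi hi]; simp
      · intro j _ hj
        rw [psi_gen hi j.2, if_neg, zero_mul]
        intro h; apply hj; ext; exact h.symm
      · simp
    | one =>
      have : χ ⟨1, hgM (one_mem _)⟩ = 0 := by
        have : (1 : Mgrp r hr) ∈ H := one_mem _
        simp only [hχ]; exact if_pos this
      rw [this]; simp [psi_one]
    | mul x y hx hy ihx ihy =>
      simp only [psi_mul, add_mul, Finset.sum_add_distrib]
      rw [← ihx, ← ihy, ← hχmul]; rfl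
    | inv x hx ihx =>
      simp only [psi_inv]
      rw [← ihx, ← hχinv ⟨x, hgM hx⟩]; rfl
  have hg0 : χ ⟨g, hgM hg⟩ = 0 := by
    rw [hχgen g hg]
    refine Finset.sum_eq_zero fun i _ => ?_
    have := psi_agr (show (i : ℕ) < max n r from lt_of_lt_of_le i.2 (le_max_right _ _)) hag
    rw [← this, hbpsi i i.2, zero_mul]
  have hgH : (⟨g, hgM hg⟩ : Mgrp r hr) ∈ H := by
    by_contra h
    simp [hχ, h] at hg0
  have h1 : (⟨g, hgM hg⟩ : Mgrp r hr)⁻¹ * b ∈ H := by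
    apply hK
    rw [agr_iff_Kgrp]
    exact (hag.mono (le_max_left _ _)).symm
  have := mul_mem hgH h1
  simpa using this

/-- a subgroup of `M` surjecting onto the Frattini quotient is dense -/
lemma dense_of_psi {r : ℕ} (hr : 1 ≤ r) (E : Subgroup (Mgrp r hr))
    (hE : ∀ τ : Mgrp r hr, ∃ e ∈ E, (∀ i < r, psi i e.1 = psi i τ.1) ∧
      (8 : ℤ_[2]) ∣ PP r e.1 [] - PP r τ.1 []) (n : ℕ) (τ : Mgrp r hr) :
    ∃ e ∈ E, Port.agr n e.1 τ.1 := by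
  set Q := Mgrp r hr ⧸ Kgrp r hr n with hQ
  set π : Mgrp r hr →* Q := QuotientGroup.mk' (Kgrp r hr n) with hπ
  have hπs : Function.Surjective π := QuotientGroup.mk'_surjective _
  suffices h : E.map π = ⊤ by
    have : π τ ∈ E.map π := by rw [h]; trivial
    obtain ⟨e, he, heq⟩ := this
    refine ⟨e, he, ?_⟩
    rw [← agr_iff_Kgrp]
    exact QuotientGroup.eq.1 heq
  by_contra hne
  have : Fact (Nat.Prime 2) := ⟨Nat.prime_two⟩
  have hp := Kgrp_pgroup r hr n
  obtain ⟨N, hN⟩ := hp.exists_card_eq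
  obtain ⟨m, hm⟩ := (hp.to_subgroup (E.map π)).exists_card_eq
  have hmN : m < N := by
    have h1 : Nat.card (E.map π) ∣ Nat.card Q := Subgroup.card_subgroup_dvd_card _
    rw [hm, hN] at h1
    have h2 : m ≤ N := (Nat.pow_dvd_pow_iff_le_right (by norm_num)).1 h1
    refine lt_of_le_of_ne h2 ?_
    rintro rfl
    exact hne (Subgroup.eq_top_of_card_eq _ (by rw [hm, hN]))
  obtain ⟨K, hK1, hK2⟩ := Sylow.exists_subgroup_card_pow_prime_le 2 (G := Q) (n := m) (m := N - 1)
    (by rw [hN]; exact pow_dvd_pow 2 (by omega)) (E.map π) hm (by omega)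
  have hKi : K.index = 2 := by
    have h1 := K.card_mul_index
    rw [hK1, hN] at h1
    have h2 : 2 ^ N = 2 ^ (N - 1) * 2 := by rw [← pow_succ]; congr 1; omega
    rw [h2] at h1
    exact Nat.eq_of_mul_eq_mul_left (by positivity) h1
  set H := K.comap π with hH
  have hHi : H.index = 2 := by rw [hH, Subgroup.index_comap_of_surjective _ hπs, hKi]
  have hKH : Kgrp r hr n ≤ H := by
    intro x hx
    have : π x = 1 := (QuotientGroup.eq_one_iff x).2 hx
    rw [hH, Subgroup.mem_comap, this]; exact one_mem _
  have hEH : E ≤ H := by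
    rw [hH, ← Subgroup.map_le_iff_le_comap]; exact hK2
  have hall : ∀ τ : Mgrp r hr, τ ∈ H := by
    intro τ
    obtain ⟨e, he, h1, h2⟩ := hE τ
    have h3 : e⁻¹ * τ ∈ H := by
      refine index_two_ker hr hHi hKH ?_ ?_
      · intro i hi
        have : psi i (e⁻¹ * τ).1 = psi i e.1⁻¹ + psi i τ.1 := psi_mul _ _ _
        rw [this, psi_inv, h1 i hi, CharTwo.add_self_eq_zero]
      · obtain ⟨c, hc⟩ := e.2
        obtain ⟨c', hcc, hc'⟩ := MP_inv hr hc
        have h4 : PP r (e⁻¹ * τ).1 [] = c' * PP r τ.1 [] := PP_mul_apply hr hc' _ _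
        rw [h4]
        rw [hc []] at h2
        have h5 := (h2.mul_left c').neg_right
        refine dvd_of_eq_of h5 ?_
        linear_combination hcc
    have := mul_mem (hEH he) h3
    simpa using this
  have : H = ⊤ := by ext x; simp [hall x]
  rw [this, Subgroup.index_top] at hHi
  omega

/-! ### Labelings -/

section labels

variable {L : Type*} [Field L]

/-- labelings of the preimage tree -/
structure IsLab (c x0 : L) (ℓ : List Bool → L) : Prop where
  root : ℓ [] = x0
  sq : ∀ (w : List Bool) (s : Bool), ℓ (w ++ [s]) ^ 2 + c = ℓ w
  neg : ∀ w : List Bool, ℓ (w ++ [false]) = - ℓ (w ++ [true])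

lemma IsLab.sq' {c x0 : L} {ℓ : List Bool → L} (h : IsLab c x0 ℓ) (w : List Bool) (s : Bool) :
    ℓ (w ++ [s]) ^ 2 = ℓ w - c := by
  rw [← h.sq w s]; ring

lemma IsLab.zero_iff {c x0 : L} {ℓ : List Bool → L} (h : IsLab c x0 ℓ) (w : List Bool) (s : Bool) :
    ℓ (w ++ [s]) = 0 ↔ ℓ w = c := by
  rw [← sub_eq_zero (b := c), ← h.sq' w s]; simp

lemma IsLab.snoc {c x0 : L} {ℓ : List Bool → L} (h : IsLab c x0 ℓ) (w : List Bool) (s : Bool) :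
    ℓ (w ++ [s]) = (-1) ^ s.toNat * ℓ (w ++ [false]) := by
  cases s
  · simp
  · rw [h.neg]; simp

lemma IsLab.prod {c x0 : L} {ℓ : List Bool → L} (h : IsLab c x0 ℓ) (t : L) (n : ℕ) :
    ∀ x : List Bool, ∏ u ∈ wds n, (t - ℓ (x ++ u)) = (fun z : L => z ^ 2 + c)^[n] t - ℓ x := by
  induction n with
  | zero => intro x; simp [wds]
  | succ n ih =>
    intro x
    rw [prod_wds_succ]
    have h1 := ih (x ++ [false])
    have h2 := ih (x ++ [true])
    simp only [List.append_assoc, List.singleton_append] at h1 h2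
    rw [h1, h2, Function.iterate_succ_apply', h.neg]
    linear_combination - h.sq x true

/-- the products `S_j(x)` -/
def S (r : ℕ) (ℓ : List Bool → L) : ℕ → List Bool → L
  | 0, x => ℓ x
  | j + 1, x => ∏ u ∈ wds (r - 1), S r ℓ j (x ++ u ++ [false])

lemma S_congr {r : ℕ} (hr : 1 ≤ r) {ℓ ℓ' : List Bool → L} (j : ℕ) : ∀ x : List Bool,
    (∀ w : List Bool, w.length = x.length + r * j → ℓ w = ℓ' w) → S r ℓ j x = S r ℓ' j x := by
  induction j with
  | zero => intro x h; exact h x (by simp)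
  | succ j ih =>
    intro x h
    refine Finset.prod_congr rfl fun u hu => ih _ fun w hw => h w ?_
    rw [mem_wds] at hu
    simp at hw
    rw [hw, hu, mul_add]; omega

lemma S_eq_prod {r : ℕ} (hr : 1 ≤ r) (ℓ : List Bool → L) (j : ℕ) : ∀ x : List Bool,
    S r ℓ (j + 1) x = ∏ w ∈ Wset r (j + 1), ℓ (x ++ w ++ [false]) := by
  induction j with
  | zero => intro x; rw [Wset_one]; rfl
  | succ j ih =>
    intro x
    rw [prod_Wset_succ hr (by omega)]
    refine Finset.prod_congr rfl fun u hu => ?_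
    rw [ih]
    refine Finset.prod_congr rfl fun w hw => ?_
    simp

/-- signs -/
def sg (L : Type*) [Field L] (r : ℕ) : ℕ → L
  | 0 => - (-1) ^ 2 ^ (r - 1)
  | j + 1 => sg L r j ^ 2 ^ (r - 1)

lemma sg_sq (r j : ℕ) : sg L r j ^ 2 = 1 := by
  induction j with
  | zero => rw [sg, neg_sq, ← pow_mul, mul_comm, pow_mul]; simp
  | succ j ih => rw [sg, ← pow_mul, mul_comm, pow_mul, ih, one_pow]

lemma sg_ne (r j : ℕ) : sg L r j ≠ 0 := by
  intro h
  have := sg_sq (L := L) r j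
  rw [h] at this; simp at this

lemma S_sq {c x0 : L} {ℓ : List Bool → L} (h : IsLab c x0 ℓ) {r : ℕ} (hr : 1 ≤ r)
    (hper : (fun z : L => z ^ 2 + c)^[r] 0 = 0) (j : ℕ) : ∀ x : List Bool,
    S r ℓ (j + 1) x ^ 2 = sg L r j * S r ℓ j x := by
  induction j with
  | zero =>
    intro x
    have h1 := h.prod c (r - 1) x
    have h2 : (fun z : L => z ^ 2 + c)^[r - 1] c = 0 := by
      obtain ⟨r, rfl⟩ : ∃ i, r = i + 1 := ⟨r - 1, by omega⟩
      rw [Function.iterate_succ_apply] at hper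
      simpa using hper
    rw [h2, zero_sub] at h1
    have h3 : S r ℓ 1 x ^ 2 = ∏ u ∈ wds (r - 1), ((-1) * (c - ℓ (x ++ u))) := by
      change (∏ u ∈ wds (r - 1), ℓ (x ++ u ++ [false])) ^ 2 = _
      rw [← Finset.prod_pow]
      refine Finset.prod_congr rfl fun u _ => ?_
      rw [h.sq']; ring
    rw [h3, Finset.prod_mul_distrib, h1, Finset.prod_const, card_wds]
    simp [sg, S]
  | succ j ih =>
    intro x
    rw [S, ← Finset.prod_pow]
    simp_rw [ih]
    rw [Finset.prod_mul_distrib, Finset.prod_const, card_wds]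
    rfl

lemma S_zero_iff {c x0 : L} {ℓ : List Bool → L} (h : IsLab c x0 ℓ) {r : ℕ} (hr : 1 ≤ r)
    (hper : (fun z : L => z ^ 2 + c)^[r] 0 = 0) (j : ℕ) (x : List Bool) :
    S r ℓ j x = 0 ↔ ℓ x = 0 := by
  induction j with
  | zero => rfl
  | succ j ih =>
    rw [← ih, ← pow_eq_zero_iff (n := 2) (by norm_num), S_sq h hr hper]
    simp [sg_ne]

/-- compatible roots of unity -/
structure IsZt (Zt : ℕ → L) : Prop where
  zero : Zt 0 = -1
  sq : ∀ j, Zt (j + 1) ^ 2 = Zt j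

lemma IsZt.pow {Zt : ℕ → L} (h : IsZt Zt) (j : ℕ) : Zt j ^ 2 ^ j = -1 := by
  induction j with
  | zero => simp [h.zero]
  | succ j ih => rw [pow_succ', pow_mul, h.sq, ih]

lemma IsZt.ne {Zt : ℕ → L} (h : IsZt Zt) (j : ℕ) : Zt j ≠ 0 := by
  intro h0
  have := h.pow j
  rw [h0, zero_pow (by positivity)] at this
  simp at this

lemma IsZt.prim {Zt : ℕ → L} (h : IsZt Zt) (h2 : (2 : L) ≠ 0) (j : ℕ) :
    IsPrimitiveRoot (Zt j) (2 ^ (j + 1)) := by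
  rw [← orderOf_eq_prime_pow (p := 2) (n := j) (x := Zt j)]
  · exact IsPrimitiveRoot.orderOf _
  · rw [h.pow]
    intro h1
    apply h2
    linear_combination -h1
  · rw [pow_succ, pow_mul, h.pow]; norm_num

lemma IsZt.zpow_eq {Zt : ℕ → L} (h : IsZt Zt) (h2 : (2 : L) ≠ 0) (j : ℕ) (a b : ℤ) :
    Zt j ^ a = Zt j ^ b ↔ (2 : ℤ) ^ (j + 1) ∣ a - b := by
  have := (h.prim h2 j).zpow_eq_one_iff_dvd (a - b)
  push_cast at this
  rw [← this, zpow_sub₀ (h.ne j), div_eq_one_iff_eq (zpow_ne_zero _ (h.ne j))]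

/-- good labelings -/
def Good (r : ℕ) (ℓ : List Bool → L) (Zt : ℕ → L) : Prop :=
  ∀ (y : List Bool) (j : ℕ), S r ℓ j (y ++ [true]) = Zt j * S r ℓ j (y ++ [false])

lemma Good.snoc {r : ℕ} {ℓ : List Bool → L} {Zt : ℕ → L} (h : Good r ℓ Zt) (y : List Bool) (j : ℕ)
    (s : Bool) : S r ℓ j (y ++ [s]) = Zt j ^ s.toNat * S r ℓ j (y ++ [false]) := by
  cases s
  · simp
  · rw [h]; simp

lemma IsLab.comp {c x0 : L} {ℓ : List Bool → L} (h : IsLab c x0 ℓ) (ε : Port) :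
    IsLab c x0 (fun w => ℓ (ε.act w)) where
  root := by simp [h.root]
  sq := by intro w s; rw [Port.act_snoc]; exact h.sq _ _
  neg := by
    intro w
    rw [Port.act_snoc, Port.act_snoc]
    cases ε w
    · exact h.neg _
    · have := h.neg (ε.act w)
      simp only [Bool.xor_true, Bool.not_false, Bool.not_true]
      rw [this, neg_neg]

lemma replicate_mem_Wset (r j : ℕ) : List.replicate (r * j - 1) false ∈ Wset r j := by
  rw [mem_Wset]
  refine ⟨by simp, fun i _ h => ?_⟩
  rw [List.getElem?_replicate] at h
  split_ifs at h
  simp at h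

lemma prod_neg_one {ι : Type*} (s : Finset ι) (b : ι → Bool) :
    ∏ i ∈ s, (-1 : L) ^ (b i).toNat = if (∑ i ∈ s, ((b i).toNat : ZMod 2)) = 0 then 1 else -1 := by
  classical
  induction s using Finset.induction_on with
  | empty => simp
  | insert a s ha ih =>
    rw [Finset.prod_insert ha, Finset.sum_insert ha, ih]
    rcases zmod2_cases (∑ i ∈ s, ((b i).toNat : ZMod 2)) with h | h <;> rw [h] <;>
      cases b a <;> simp
    exact fun h => absurd (by decide) h

lemma exists_good {c x0 : L} {ℓ0 : List Bool → L} (h0 : IsLab c x0 ℓ0) {r : ℕ} (hr : 1 ≤ r)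
    (hper : (fun z : L => z ^ 2 + c)^[r] 0 = 0) {Zt : ℕ → L} (hZt : IsZt Zt) :
    ∃ ℓ, IsLab c x0 ℓ ∧ Good r ℓ Zt := by
  classical
  suffices hb : ∃ ε : Port, ∀ m, ∀ (y : List Bool) (j : ℕ), y.length + r * j = m →
      S r (fun w => ℓ0 (ε.act w)) j (y ++ [true]) =
        Zt j * S r (fun w => ℓ0 (ε.act w)) j (y ++ [false]) by
    obtain ⟨ε, hε⟩ := hb
    exact ⟨_, h0.comp ε, fun y j => hε _ y j rfl⟩
  refine build_port (fun m ε => ∀ (y : List Bool) (j : ℕ), y.length + r * j = m →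
      S r (fun w => ℓ0 (ε.act w)) j (y ++ [true]) =
        Zt j * S r (fun w => ℓ0 (ε.act w)) j (y ++ [false])) ?_ ?_
  · intro m e e' h hC y j hy
    have hag : Port.agr (m + 1) e e' := fun w hw => h w (by omega)
    have := hC y j hy
    rw [S_congr hr (ℓ' := fun w => ℓ0 (e'.act w)) j (y ++ [true]),
      S_congr hr (ℓ' := fun w => ℓ0 (e'.act w)) j (y ++ [false])] at this
    · exact this
    · intro w hw
      rw [hag.act_eq]
      simp at hw; omega
    · intro w hw
      rw [hag.act_eq]
      simp at hw; omega
  · intro m e hprev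
    set ℓ := fun w => ℓ0 (e.act w) with hℓ
    have hlab : IsLab c x0 ℓ := h0.comp e
    obtain ⟨δ, hδ, hs⟩ := lemmaA hr m (fun _ => True) (by
        rintro y j hj _ ⟨s, w, hw, _⟩
        exact ⟨w, hw, trivial⟩)
      (fun j y => if S r ℓ j (y ++ [true]) = Zt j * S r ℓ j (y ++ [false]) then 0 else 1)
    set e' : Port := Port.ofFun fun v => xor (e v) (δ v) with he'
    have hag : Port.agr m e' e := by
      intro v hv
      rw [he', Port.ofFun_apply]
      cases h : δ v
      · simp
      · have := (hδ v h).2; omega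
    refine ⟨e', hag, fun y j hy => ?_⟩
    set ℓ' := fun w => ℓ0 (e'.act w) with hℓ'
    have hlab' : IsLab c x0 ℓ' := h0.comp e'
    cases j with
    | zero =>
      change ℓ' _ = _ * ℓ' _
      rw [hZt.zero, hlab'.neg]; ring
    | succ j =>
      have hprod : ∀ s, S r ℓ' (j + 1) (y ++ [s]) =
          (∏ w ∈ Wset r (j + 1), (-1 : L) ^ (δ (y ++ [s] ++ w)).toNat) *
            S r ℓ (j + 1) (y ++ [s]) := by
        intro s
        rw [S_eq_prod hr, S_eq_prod hr, ← Finset.prod_mul_distrib]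
        refine Finset.prod_congr rfl fun w hw => ?_
        rw [mem_Wset] at hw
        have hr1 : r ≤ r * (j + 1) := Nat.le_mul_of_pos_right r (by omega)
        have hlen : (y ++ [s] ++ w).length ≤ m := by simp [hw.1]; omega
        simp only [hℓ, hℓ']
        rw [Port.act_snoc, Port.act_snoc, hag.act_eq hlen, h0.snoc, h0.snoc _ (xor false _), he',
          Port.ofFun_apply]
        cases e (y ++ [s] ++ w) <;> cases δ (y ++ [s] ++ w) <;> simp
      have hS := hs y (j + 1) (by omega) hy
        ⟨false, _, replicate_mem_Wset r (j + 1), trivial⟩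
      have hpm : S r ℓ (j + 1) (y ++ [true]) = Zt (j + 1) * S r ℓ (j + 1) (y ++ [false]) ∨
          S r ℓ (j + 1) (y ++ [true]) = -(Zt (j + 1) * S r ℓ (j + 1) (y ++ [false])) := by
        rw [← sq_eq_sq_iff_eq_or_eq_neg, mul_pow, hZt.sq, S_sq hlab hr hper, S_sq hlab hr hper,
          hprev _ (show y.length + r * j < m by rw [mul_add] at hy; omega) y j rfl]
        ring
      rw [hprod, hprod]
      rw [prod_neg_one, prod_neg_one]
      unfold AS at hS
      rw [Finset.sum_add_distrib] at hS
      set A := ∑ w ∈ Wset r (j + 1), ((δ (y ++ [false] ++ w)).toNat : ZMod 2)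
      set B := ∑ w ∈ Wset r (j + 1), ((δ (y ++ [true] ++ w)).toNat : ZMod 2)
      by_cases hc : S r ℓ (j + 1) (y ++ [true]) = Zt (j + 1) * S r ℓ (j + 1) (y ++ [false])
      · rw [if_pos hc] at hS
        have : A = B := by
          rcases zmod2_cases A with h1 | h1 <;> rcases zmod2_cases B with h2 | h2 <;>
            rw [h1, h2] at hS ⊢ <;> revert hS <;> decide
        rw [this, hc]; ring
      · rw [if_neg hc] at hS
        rw [hpm.resolve_left hc]
        rcases zmod2_cases A with h1 | h1 <;> rcases zmod2_cases B with h2 | h2 <;>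
            rw [h1, h2] at hS ⊢
        · exact absurd hS (by decide)
        · simp
        · simp
        · exact absurd hS (by decide)

end labels

/-! ### Action on good labelings -/

section action

variable {L : Type*} [Field L]

lemma act_S {r : ℕ} (hr : 1 ≤ r) {ℓ : List Bool → L} {Zt : ℕ → L} (hZt : IsZt Zt)
    (hg : Good r ℓ Zt) {σ : L →+* L} {τ : Port} {N : ℕ}
    (hσ : ∀ w : List Bool, w.length ≤ N → σ (ℓ w) = ℓ (τ.act w)) (j : ℕ) :
    ∀ x : List Bool, x.length + r * j ≤ N →
      σ (S r ℓ j x) = Zt j ^ q r j τ x * S r ℓ j (τ.act x) := by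
  induction j with
  | zero => intro x hx; rw [q_zero, zpow_zero, one_mul]; exact hσ x (by simpa using hx)
  | succ j ih =>
    intro x hx
    rw [q_succ hr, zpow_mul, zpow_ofNat, hZt.sq]
    rw [S, S, map_prod]
    have h1 : ∀ u ∈ wds (r - 1), σ (S r ℓ j (x ++ u ++ [false])) =
        Zt j ^ (((τ (x ++ u)).toNat : ℤ) + q r j τ (x ++ u ++ [false])) *
          (fun v => S r ℓ j (v ++ [false])) (τ.act (x ++ u)) := by
      intro u hu
      rw [mem_wds] at hu
      rw [ih _ (by simp; rw [mul_add] at hx; omega), Port.act_snoc, hg.snoc, zpow_add₀ (hZt.ne j),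
        zpow_natCast, Bool.false_xor]
      ring
    have h5 := prod_wds_act' (r - 1) τ x (fun v => S r ℓ j (v ++ [false]))
    rw [Finset.prod_congr rfl h1, Finset.prod_mul_distrib]
    refine congrArg₂ (· * ·) ?_ h5
    induction (wds (r - 1)) using Finset.induction_on with
    | empty => simp
    | insert a s ha ihs => rw [Finset.prod_insert ha, Finset.sum_insert ha, ihs, ← zpow_add₀ (hZt.ne j)]

lemma act_Zt {r : ℕ} (hr : 1 ≤ r) {c x0 : L} {ℓ : List Bool → L} (hl : IsLab c x0 ℓ)
    (hper : (fun z : L => z ^ 2 + c)^[r] 0 = 0) {Zt : ℕ → L} (hZt : IsZt Zt)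
    (hg : Good r ℓ Zt) {σ : L →+* L} (hσc : σ c = c) {τ : Port} {N : ℕ}
    (hσ : ∀ w : List Bool, w.length ≤ N → σ (ℓ w) = ℓ (τ.act w)) (j : ℕ) (y : List Bool)
    (hy : y.length + r * j + 1 ≤ N) (hyc : ℓ y ≠ c) : σ (Zt j) = Zt j ^ p r j τ y := by
  have h1 := act_S hr hZt hg hσ j (y ++ [true]) (by simp; omega)
  have h2 := act_S hr hZt hg hσ j (y ++ [false]) (by simp; omega)
  rw [hg, map_mul, h2, Port.act_snoc, Port.act_snoc, hg.snoc, hg.snoc _ _ (xor true _)] at h1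
  have h3 : S r ℓ j (τ.act y ++ [false]) ≠ 0 := by
    rw [Ne, S_zero_iff hl hr hper, hl.zero_iff, ← hσ y (by omega), ← hσc]
    exact fun h => hyc (σ.injective h)
  have hz := hZt.ne j
  have hq := zpow_ne_zero (q r j τ (y ++ [false])) hz
  unfold p
  cases hτ : τ y
  · rw [hτ] at h1
    simp only [Bool.xor_false, Bool.toNat_false, Bool.toNat_true, pow_zero, pow_one, one_mul] at h1 ⊢
    rw [add_sub_assoc, zpow_add₀ hz, zpow_sub₀ hz, zpow_one]
    field_simp
    apply mul_right_cancel₀ h3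
    linear_combination h1
  · rw [hτ] at h1
    simp only [Bool.xor_true, Bool.not_false, Bool.not_true, Bool.toNat_false, Bool.toNat_true, pow_zero, pow_one, one_mul] at h1 ⊢
    rw [add_sub_assoc, zpow_add₀ hz, zpow_sub₀ hz, zpow_neg, zpow_one]
    field_simp
    apply mul_right_cancel₀ h3
    linear_combination h1

lemma exists_c {Zt : ℕ → L} (hZt : IsZt Zt) (h2 : (2 : L) ≠ 0) (σ : L →+* L) :
    ∃ c : ℕ → ℤ, (∀ j, σ (Zt j) = Zt j ^ c j) ∧ (∀ j, (2 : ℤ) ^ (j + 1) ∣ c (j + 1) - c j) ∧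
      (2 : ℤ) ∣ c 0 - 1 := by
  have : ∀ j, ∃ a : ℤ, σ (Zt j) = Zt j ^ a := by
    intro j
    have h1 : σ (Zt j) ^ 2 ^ (j + 1) = 1 := by
      rw [← map_pow, (hZt.prim h2 j).pow_eq_one, map_one]
    have : NeZero (2 ^ (j + 1)) := ⟨by positivity⟩
    obtain ⟨i, _, hi⟩ := (hZt.prim h2 j).eq_pow_of_pow_eq_one h1
    exact ⟨i, by rw [zpow_natCast, hi]⟩
  choose c hc using this
  refine ⟨c, hc, fun j => ?_, ?_⟩
  · rw [← hZt.zpow_eq h2 j, ← hc j, ← hZt.sq j, map_pow, hc, ← zpow_natCast, ← zpow_natCast,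
      ← zpow_mul, ← zpow_mul, mul_comm]
  · have := hZt.zpow_eq h2 0 (c 0) 1
    rw [zero_add, pow_one] at this
    rw [← this, ← hc 0, hZt.zero]; simp

lemma exists_lift {r : ℕ} (hr : 1 ≤ r) {c x0 : L} {ℓ : List Bool → L} (hl : IsLab c x0 ℓ)
    (hper : (fun z : L => z ^ 2 + c)^[r] 0 = 0) {Zt : ℕ → L} (hZt : IsZt Zt)
    (hg : Good r ℓ Zt) (h2 : (2 : L) ≠ 0) {σ : L →+* L} (hσc : σ c = c) (hσx : σ x0 = x0) :
    ∃ τ ∈ Mgrp r hr, (∀ w, σ (ℓ w) = ℓ (τ.act w)) ∧ ∀ y j, σ (Zt j) = Zt j ^ p r j τ y := by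
  obtain ⟨cc, hcc, hcoh, hodd⟩ := exists_c hZt h2 σ
  have hj0 : ∀ (e : Port) (y : List Bool), (2 : ℤ) ^ (0 + 1) ∣ p r 0 e y - cc 0 := by
    intro e y
    have := dvd_sub (p_odd (r := r) e y) hodd
    exact dvd_of_eq_of this (by ring)
  suffices hb : ∃ e : Port, ∀ m, (∀ w : List Bool, w.length ≤ m + 1 → σ (ℓ w) = ℓ (e.act w)) ∧
      ∀ (y : List Bool) (j : ℕ), y.length + r * j = m → (2 : ℤ) ^ (j + 1) ∣ p r j e y - cc j by
    obtain ⟨e, he⟩ := hb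
    have h : ∀ y j, (2 : ℤ) ^ (j + 1) ∣ p r j e y - cc j := fun y j => (he _).2 y j rfl
    refine ⟨e, mem_Mgrp_of_p hr h, fun w => (he w.length).1 w (by omega), fun y j => ?_⟩
    rw [hcc j]
    exact ((hZt.zpow_eq h2 j _ _).2 (h y j)).symm
  refine build_port (fun m e => (∀ w : List Bool, w.length ≤ m + 1 → σ (ℓ w) = ℓ (e.act w)) ∧
      ∀ (y : List Bool) (j : ℕ), y.length + r * j = m → (2 : ℤ) ^ (j + 1) ∣ p r j e y - cc j) ?_ ?_
  · rintro m e e' h ⟨h1, h2⟩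
    have hag : Port.agr (m + 1) e e' := fun w hw => h w (by omega)
    refine ⟨fun w hw => by rw [← hag.act_eq hw]; exact h1 w hw, fun y j hy => ?_⟩
    rw [← p_agr hag (by omega) hr]
    exact h2 y j hy
  · intro m e hprev
    have hlow : ∀ w : List Bool, w.length ≤ m → σ (ℓ w) = ℓ (e.act w) := by
      intro w hw
      rcases Nat.eq_zero_or_pos m with h | h
      · have : w = [] := List.length_eq_zero_iff.1 (by omega)
        subst this
        rw [Port.act_nil, hl.root, hσx]
      · exact (hprev (m - 1) (by omega)).1 w (by omega)
    classical
    set e1 : Port := Port.ofFun fun v => if v.length = m then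
      (if σ (ℓ (v ++ [false])) = ℓ (e.act v ++ [false]) then false else true) else e v with he1
    have hag1 : Port.agr m e1 e := by
      intro v hv
      rw [he1, Port.ofFun_apply, if_neg (by omega)]
    obtain ⟨e', h1, h3⟩ := solve hr m (fun v => ℓ v = c) (by
        rintro y j hj _ ⟨s, w, hw, hc⟩
        obtain ⟨j, rfl⟩ : ∃ i, j = i + 1 := ⟨j - 1, by omega⟩
        have h4 : S r ℓ (j + 1) (y ++ [s]) = 0 := by
          rw [S_eq_prod hr]
          refine Finset.prod_eq_zero hw ?_
          rw [hl.zero_iff]; exact hc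
        rw [S_zero_iff hl hr hper, hl.zero_iff, ← hl.zero_iff y true,
          ← S_zero_iff hl hr hper (j + 1), S_eq_prod hr, Finset.prod_eq_zero_iff] at h4
        obtain ⟨w', hw', h5⟩ := h4
        rw [hl.zero_iff] at h5
        exact ⟨w', hw', h5⟩) e1 cc hcoh (by
        intro y j hlt
        rw [p_agr hag1 (by omega) hr]
        exact (hprev _ hlt).2 y j rfl)
    have hag : Port.agr m e' e := by
      intro v hv
      rw [← hag1 v hv]
      by_contra hne
      have := (h1 v hne).2
      omega
    have hlab : ∀ w : List Bool, w.length ≤ m + 1 → σ (ℓ w) = ℓ (e'.act w) := by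
      intro w hw
      rcases Nat.lt_or_ge m w.length with hlt | hle
      · obtain ⟨v, s, rfl⟩ : ∃ v s, w = v ++ [s] :=
          ⟨w.dropLast, w.getLast (by rintro rfl; simp at hlt), (List.dropLast_append_getLast _).symm⟩
        have hv : v.length = m := by simp at hw hlt; omega
        rw [Port.act_snoc, hag.act_eq hv.le]
        by_cases hvc : ℓ v = c
        · have h4 : ℓ (e.act v) = c := by rw [← hlow v hv.le, hvc, hσc]
          rw [(hl.zero_iff _ _).2 h4, (hl.zero_iff _ _).2 hvc, map_zero]
        · have h5 : e' v = e1 v := by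
            by_contra hne
            exact hvc (h1 v hne).1
          have hpm : σ (ℓ (v ++ [false])) = ℓ (e.act v ++ [false]) ∨
              σ (ℓ (v ++ [false])) = - ℓ (e.act v ++ [false]) := by
            rw [← sq_eq_sq_iff_eq_or_eq_neg, ← map_pow, hl.sq', hl.sq', map_sub, hσc, hlow v hv.le]
          rw [h5, he1, Port.ofFun_apply, if_pos hv, hl.snoc v s, hl.snoc _ (xor s _), map_mul, map_pow, map_neg, map_one]
          split_ifs with hif
          · rw [hif]; simp
          · rw [hpm.resolve_left hif]; cases s <;> simp
      · rw [hag.act_eq hle]; exact hlow w hle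
    refine ⟨e', hag, hlab, fun y j hy => ?_⟩
    cases j with
    | zero => exact hj0 _ _
    | succ j =>
      by_cases hex : ∃ s, ∃ w ∈ Wset r (j + 1), ℓ (y ++ [s] ++ w) = c
      · exact h3 y (j + 1) (by omega) hy hex
      · rw [← hZt.zpow_eq h2, ← hcc]
        refine (act_Zt hr hl hper hZt hg hσc hlab (j + 1) y (by omega) ?_).symm
        intro hyc
        rw [← hl.zero_iff y true, ← S_zero_iff hl hr hper (j + 1), S_eq_prod hr,
          Finset.prod_eq_zero_iff] at hyc
        obtain ⟨w', hw', h5⟩ := hyc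
        rw [hl.zero_iff] at h5
        exact hex ⟨true, w', hw', h5⟩

end action

/-! ### Field theory -/

section fields

variable {k : Type*} {Ω : Type*} [Field k] [Field Ω] [Algebra k Ω]

lemma exists_sqrt_seq [IsAlgClosed Ω] : ∃ Zt : ℕ → Ω, IsZt Zt := by
  have h : ∀ z : Ω, ∃ y, y ^ 2 = z := fun z => IsAlgClosed.exists_pow_nat_eq z (by norm_num)
  choose s hs using h
  exact ⟨fun n => s^[n] (-1), rfl, fun j => by rw [Function.iterate_succ_apply', hs]⟩

lemma exists_lab [IsAlgClosed Ω] (c x0 : Ω) : ∃ ℓ : List Bool → Ω, IsLab c x0 ℓ := by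
  have h : ∀ z : Ω, ∃ y, y ^ 2 = z - c := fun z => IsAlgClosed.exists_pow_nat_eq _ (by norm_num)
  choose s hs using h
  refine ⟨fun w => w.foldl (fun z b => if b then s z else - s z) x0, rfl, ?_, ?_⟩
  · intro w b
    rw [List.foldl_append]
    cases b
    · simp [hs]
    · simp [hs]
  · intro w
    simp [List.foldl_append]

lemma sep_of_sq [Algebra.IsAlgebraic k Ω] (h2 : (2 : k) ≠ 0) {x : Ω} (h : IsSeparable k (x ^ 2)) :
    IsSeparable k x := by
  by_cases hx : x = 0
  · subst hx
    simpa using h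
  set E := separableClosure k Ω
  have hm : x ^ 2 ∈ E := mem_separableClosure_iff.2 h
  refine IsSeparable.of_algebra_isSeparable_of_isSeparable (E := E) k ?_
  have h1 : (X ^ 2 - C (⟨x ^ 2, hm⟩ : E) : Polynomial E).Separable := by
    apply Polynomial.separable_X_pow_sub_C
    · intro h0
      apply h2
      have : algebraMap k E 2 = 0 := by rw [← h0]; exact map_ofNat (algebraMap k E) 2
      exact (map_eq_zero _).1 this
    · intro h0
      have := congrArg Subtype.val h0
      simp [hx] at this
  refine Polynomial.Separable.of_dvd h1 (minpoly.dvd _ _ ?_)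
  rw [map_sub, map_pow, aeval_X, aeval_C, sub_eq_zero]
  rfl

lemma IsLab.sep [Algebra.IsAlgebraic k Ω] (h2 : (2 : k) ≠ 0) {c x0 : k} {ℓ : List Bool → Ω}
    (hl : IsLab (algebraMap k Ω c) (algebraMap k Ω x0) ℓ) (w : List Bool) : IsSeparable k (ℓ w) := by
  induction w using List.reverseRecOn with
  | nil => rw [hl.root]; exact isSeparable_algebraMap _
  | append_singleton w s ih =>
    apply sep_of_sq h2
    rw [hl.sq', ← mem_separableClosure_iff]
    rw [← mem_separableClosure_iff] at ih
    exact sub_mem ih (IntermediateField.algebraMap_mem _ _)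

lemma IsZt.sep [Algebra.IsAlgebraic k Ω] (h2 : (2 : k) ≠ 0) {Zt : ℕ → Ω} (h : IsZt Zt) (j : ℕ) :
    IsSeparable k (Zt j) := by
  induction j with
  | zero =>
    rw [h.zero, ← mem_separableClosure_iff]
    exact neg_mem (one_mem _)
  | succ j ih =>
    apply sep_of_sq h2
    rwa [h.sq]

lemma adjoin_agree {T : Set Ω} {σ σ' : Ω →ₐ[k] Ω} (h : ∀ t ∈ T, σ t = σ' t) (x : Ω)
    (hx : x ∈ IntermediateField.adjoin k T) : σ x = σ' x := by
  induction hx using IntermediateField.adjoin_induction with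
  | mem x hx => exact h x hx
  | algebraMap x => simp
  | add x y _ _ hx hy => simp [hx, hy]
  | inv x _ hx => simp [hx]
  | mul x y _ _ hx hy => simp [hx, hy]

lemma adjoin_agree' {T : Set Ω} {σ σ' : IntermediateField.adjoin k T ≃ₐ[k] IntermediateField.adjoin k T}
    (h : ∀ (t : Ω) (ht : t ∈ IntermediateField.adjoin k T), t ∈ T → σ ⟨t, ht⟩ = σ' ⟨t, ht⟩) :
    σ = σ' := by
  ext ⟨x, hx⟩
  congr 1
  induction hx using IntermediateField.adjoin_induction with
  | mem x hx => exact h x (IntermediateField.subset_adjoin _ _ hx) hx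
  | algebraMap x => exact (σ.commutes x).trans (σ'.commutes x).symm
  | add x y h1 h2 hx hy => 
    have := congrArg₂ (· + ·) hx hy
    simp only [← map_add] at this
    exact this
  | inv x h1 hx => 
    have := congrArg (·⁻¹) hx
    simp only [← map_inv₀] at this
    exact this
  | mul x y h1 h2 hx hy => 
    have := congrArg₂ (· * ·) hx hy
    simp only [← map_mul] at this
    exact this

lemma adjoin_normal [Normal k Ω] {T : Set Ω}
    (h : ∀ σ : Ω ≃ₐ[k] Ω, ∀ t ∈ T, σ t ∈ IntermediateField.adjoin k T) : Normal k (IntermediateField.adjoin k T) := by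
  rw [IntermediateField.normal_iff_forall_map_le']
  intro σ
  rw [IntermediateField.adjoin_map, IntermediateField.adjoin_le_iff]
  rintro _ ⟨t, ht, rfl⟩
  exact h σ t ht

lemma finrank_adjoin [Normal k Ω] {T : Set Ω} (hfin : T.Finite)
    (h : ∀ σ : Ω ≃ₐ[k] Ω, ∀ t ∈ T, σ t ∈ IntermediateField.adjoin k T) (hsep : ∀ t ∈ T, IsSeparable k t)
    {Y : Type*} (g : (Ω ≃ₐ[k] Ω) → Y) (hg : ∀ σ σ', g σ = g σ' ↔ ∀ t ∈ T, σ t = σ' t) :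
    Module.finrank k (IntermediateField.adjoin k T) = Nat.card (Set.range g) := by
  have hn := adjoin_normal h
  have hs : Algebra.IsSeparable k (IntermediateField.adjoin k T) :=
    (IntermediateField.isSeparable_adjoin_iff_isSeparable k Ω).2 hsep
  have : Finite T := hfin
  have hfd : FiniteDimensional k (IntermediateField.adjoin k T) :=
    IntermediateField.finiteDimensional_adjoin fun x hx => (hsep x hx).isIntegral
  have hG : IsGalois k (IntermediateField.adjoin k T) := ⟨⟩
  rw [← IsGalois.card_aut_eq_finrank]
  symm
  have hsurj := AlgEquiv.restrictNormalHom_surjective (F := k) (K₁ := IntermediateField.adjoin k T) Ω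
  have key : ∀ σ σ' : Ω ≃ₐ[k] Ω, g σ = g σ' ↔
      AlgEquiv.restrictNormalHom (IntermediateField.adjoin k T) σ =
      AlgEquiv.restrictNormalHom (IntermediateField.adjoin k T) σ' := by
    intro σ σ'
    rw [hg]
    constructor
    · intro h1
      ext x
      rw [AlgEquiv.restrictNormalHom_apply, AlgEquiv.restrictNormalHom_apply]
      exact adjoin_agree (σ := σ.toAlgHom) (σ' := σ'.toAlgHom) h1 x.1 x.2
    · intro h1 t ht
      have := congrArg (fun e => ((e ⟨t, IntermediateField.subset_adjoin _ _ ht⟩ : IntermediateField.adjoin k T) : Ω)) h1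
      simpa only [AlgEquiv.restrictNormalHom_apply] using this
  refine Nat.card_congr (Equiv.ofBijective
    (fun y : Set.range g => AlgEquiv.restrictNormalHom (IntermediateField.adjoin k T) y.2.choose) ⟨?_, ?_⟩)
  · intro y y' hyy
    have := (key _ _).2 hyy
    rw [y.2.choose_spec, y'.2.choose_spec] at this
    exact Subtype.ext this
  · intro e
    obtain ⟨σ, rfl⟩ := hsurj e
    refine ⟨⟨g σ, σ, rfl⟩, ?_⟩
    apply (key _ _).1
    exact Exists.choose_spec (p := fun s => g s = g σ) _

lemma finrank_eq_card_iff [Normal k Ω] {T : Set Ω} (hfin : T.Finite)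
    (h : ∀ σ : Ω ≃ₐ[k] Ω, ∀ t ∈ T, σ t ∈ IntermediateField.adjoin k T) (hsep : ∀ t ∈ T, IsSeparable k t)
    {Y A : Type*} [Finite A] (g : (Ω ≃ₐ[k] Ω) → Y) (hg : ∀ σ σ', g σ = g σ' ↔ ∀ t ∈ T, σ t = σ' t)
    (f : A → Y) (hf : ∀ σ, ∃ a, f a = g σ) :
    Module.finrank k (IntermediateField.adjoin k T) = Nat.card A ↔
      (∀ a, ∃ σ, g σ = f a) ∧ Function.Injective f := by
  rw [finrank_adjoin hfin h hsep g hg]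
  have hsub : Set.range g ⊆ Set.range f := by
    rintro _ ⟨σ, rfl⟩; exact hf σ
  have hfr : (Set.range f).Finite := Set.finite_range f
  constructor
  · intro hc
    have h1 : Nat.card (Set.range g) ≤ Nat.card (Set.range f) := Nat.card_mono hfr hsub
    have h3 : Nat.card (Set.range f) ≤ Nat.card A := Finite.card_range_le f
    constructor
    · have : Set.range g = Set.range f := by
        apply Set.eq_of_subset_of_ncard_le hsub _ hfr
        rw [← Nat.card_coe_set_eq, ← Nat.card_coe_set_eq]; omega
      intro a
      have h4 : f a ∈ Set.range g := by rw [this]; exact ⟨a, rfl⟩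
      exact h4
    · have h5 : Nat.card A ≤ Nat.card (Set.range f) := by omega
      have h6 : Function.Injective (Set.rangeFactorization f) := by
        have : Function.Bijective (Set.rangeFactorization f) :=
          (Nat.bijective_iff_surjective_and_card _).2 ⟨Set.rangeFactorization_surjective, by omega⟩
        exact this.1
      intro a b hab
      exact h6 (Subtype.ext hab)
  · rintro ⟨h1, h2⟩
    have : Set.range g = Set.range f := by
      refine subset_antisymm hsub ?_
      rintro _ ⟨a, rfl⟩; exact h1 a
    rw [this]
    exact (Nat.card_congr (Equiv.ofInjective f h2)).symm

end fields

/-! ### Splitting fields and labelings -/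

section splitting

variable {k : Type*} {Ω : Type*} [Field k] [Field Ω] [Algebra k Ω]

lemma aeval_F {c : k} {F : ℕ → Polynomial k} (hF0 : F 0 = X)
    (hFs : ∀ m : ℕ, F (m+1) = (X ^ 2 + C c).comp (F m)) (n : ℕ) (t : Ω) :
    aeval t (F n) = (fun z : Ω => z ^ 2 + algebraMap k Ω c)^[n] t := by
  induction n with
  | zero => simp [hF0]
  | succ n ih =>
    rw [hFs, aeval_comp, Function.iterate_succ_apply', ih]
    simp

lemma natDegree_F {c : k} {F : ℕ → Polynomial k} (hF0 : F 0 = X)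
    (hFs : ∀ m : ℕ, F (m+1) = (X ^ 2 + C c).comp (F m)) (n : ℕ) : (F n).natDegree = 2 ^ n := by
  induction n with
  | zero => simp [hF0]
  | succ n ih =>
    rw [hFs, natDegree_comp, ih, natDegree_X_pow_add_C, pow_succ]; ring

lemma IsLab.exists_of_iter {c x0 : Ω} {ℓ : List Bool → Ω} (h : IsLab c x0 ℓ) {t : Ω} {n : ℕ}
    (ht : (fun z : Ω => z ^ 2 + c)^[n] t = x0) : ∃ w : List Bool, w.length = n ∧ ℓ w = t := by
  have h1 := h.prod t n []
  rw [h.root, ht, sub_self, Finset.prod_eq_zero_iff] at h1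
  obtain ⟨w, hw, h2⟩ := h1
  exact ⟨w, mem_wds.1 hw, (sub_eq_zero.1 h2).symm⟩

lemma IsLab.iter {c x0 : Ω} {ℓ : List Bool → Ω} (h : IsLab c x0 ℓ) (w : List Bool) :
    (fun z : Ω => z ^ 2 + c)^[w.length] (ℓ w) = x0 := by
  have h1 := h.prod (ℓ w) w.length []
  rw [h.root, Finset.prod_eq_zero (mem_wds.2 rfl) (by simp)] at h1
  exact (sub_eq_zero.1 h1.symm)

lemma rootSet_F {c x0 : k} {F : ℕ → Polynomial k} (hF0 : F 0 = X)
    (hFs : ∀ m : ℕ, F (m+1) = (X ^ 2 + C c).comp (F m)) {ℓ : List Bool → Ω}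
    (hl : IsLab (algebraMap k Ω c) (algebraMap k Ω x0) ℓ) (n : ℕ) :
    (F n - C x0).rootSet Ω = ℓ '' {w | w.length = n} := by
  have hne : F n - C x0 ≠ 0 := by
    intro h
    have h1 := natDegree_F hF0 hFs n
    rw [sub_eq_zero.1 h, natDegree_C] at h1
    have : 0 < 2 ^ n := by positivity
    omega
  ext t
  rw [mem_rootSet_of_ne hne, map_sub, aeval_C, aeval_F hF0 hFs, sub_eq_zero]
  constructor
  · intro h
    obtain ⟨w, hw, h1⟩ := hl.exists_of_iter h
    exact ⟨w, hw, h1⟩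
  · rintro ⟨w, rfl, rfl⟩
    exact hl.iter w

lemma iSup_F {c x0 : k} {F : ℕ → Polynomial k} (hF0 : F 0 = X)
    (hFs : ∀ m : ℕ, F (m+1) = (X ^ 2 + C c).comp (F m)) {ℓ : List Bool → Ω}
    (hl : IsLab (algebraMap k Ω c) (algebraMap k Ω x0) ℓ) :
    (⨆ n : ℕ, IntermediateField.adjoin k ((F n - C x0).rootSet Ω)) =
      IntermediateField.adjoin k (Set.range ℓ) := by
  simp_rw [rootSet_F hF0 hFs hl]
  apply le_antisymm
  · refine iSup_le fun n => IntermediateField.adjoin.mono _ _ _ ?_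
    exact Set.image_subset_range _ _
  · rw [IntermediateField.adjoin_le_iff]
    rintro _ ⟨w, rfl⟩
    refine le_iSup (fun n => IntermediateField.adjoin k (ℓ '' {w | w.length = n})) w.length ?_
    exact IntermediateField.subset_adjoin _ _ ⟨w, rfl, rfl⟩

instance finite_MsetN (r n : ℕ) : Finite (MsetN r n) := by
  have : Finite {w : List Bool // w.length ≤ n} := (List.finite_length_le Bool n).to_subtype
  have h : (Set.pi Set.univ fun w : {w : List Bool // w.length ≤ n} =>
      {v : List Bool | v.length = w.1.length}).Finite :=
    Set.Finite.pi fun w => List.finite_length_eq Bool _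
  refine (h.subset ?_).to_subtype
  rintro _ ⟨σ, hσ, rfl⟩ w _
  exact hσ.1.2.1 w.1

/-- every automorphism lifts to `M_r` -/
def LP (k : Type*) [Field k] {Ω : Type*} [Field Ω] [Algebra k Ω] (r : ℕ) (ℓ : List Bool → Ω) : Prop :=
  ∀ σ : Ω ≃ₐ[k] Ω, ∃ τ ∈ Mset r, ∀ w, σ (ℓ w) = ℓ (τ w)

/-- every element of `M_r` is realised up to level `n` -/
def XP (k : Type*) [Field k] {Ω : Type*} [Field Ω] [Algebra k Ω] (r : ℕ) (ℓ : List Bool → Ω)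
    (n : ℕ) : Prop :=
  ∀ τ ∈ Mset r, ∃ σ : Ω ≃ₐ[k] Ω, ∀ w : List Bool, w.length ≤ n → σ (ℓ w) = ℓ (τ w)

lemma stable_image {c x0 : k} {ℓ : List Bool → Ω}
    (hl : IsLab (algebraMap k Ω c) (algebraMap k Ω x0) ℓ) (n : ℕ) (σ : Ω ≃ₐ[k] Ω) :
    ∀ t ∈ ℓ '' {w | w.length = n}, σ t ∈ ℓ '' {w | w.length = n} := by
  rintro _ ⟨w, hw, rfl⟩
  obtain rfl : w.length = n := hw
  have h1 := congrArg σ (hl.iter w)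
  rw [AlgEquiv.commutes] at h1
  have h2 : ∀ (m : ℕ) (t : Ω), σ ((fun z : Ω => z ^ 2 + algebraMap k Ω c)^[m] t) =
      (fun z : Ω => z ^ 2 + algebraMap k Ω c)^[m] (σ t) := by
    intro m
    induction m with
    | zero => intro t; rfl
    | succ m ih => intro t; rw [Function.iterate_succ_apply, ih, Function.iterate_succ_apply]; simp
  rw [h2] at h1
  obtain ⟨v, hv, h3⟩ := hl.exists_of_iter h1
  exact ⟨v, hv, h3⟩

lemma stable_range {c x0 : k} {ℓ : List Bool → Ω}
    (hl : IsLab (algebraMap k Ω c) (algebraMap k Ω x0) ℓ) (σ : Ω ≃ₐ[k] Ω) :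
    ∀ t ∈ Set.range ℓ, σ t ∈ Set.range ℓ := by
  rintro _ ⟨w, rfl⟩
  obtain ⟨v, _, hv⟩ := stable_image hl w.length σ _ ⟨w, rfl, rfl⟩
  exact ⟨v, hv⟩

lemma lemmaC [Normal k Ω] (h2 : (2 : k) ≠ 0) {c x0 : k} {ℓ : List Bool → Ω}
    (hl : IsLab (algebraMap k Ω c) (algebraMap k Ω x0) ℓ) {r : ℕ} (hLP : LP k r ℓ) (n : ℕ) :
    Module.finrank k (IntermediateField.adjoin k (ℓ '' {w | w.length = n})) = Nat.card (MsetN r n) ↔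
      XP k r ℓ n ∧ ∀ τ ∈ Mset r, ∀ τ' ∈ Mset r, 
        (∀ w : List Bool, w.length ≤ n → ℓ (τ w) = ℓ (τ' w)) → 
          ∀ w : List Bool, w.length ≤ n → τ w = τ' w := by
  have hdown : ∀ (σ σ' : Ω ≃ₐ[k] Ω), (∀ w : List Bool, w.length = n → σ (ℓ w) = σ' (ℓ w)) →
      ∀ (m : ℕ) (w : List Bool), w.length + m = n → σ (ℓ w) = σ' (ℓ w) := by
    intro σ σ' h m
    induction m with
    | zero => intro w hw; exact h w (by omega)
    | succ m ih =>
      intro w hw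
      have := ih (w ++ [false]) (by simp; omega)
      rw [← hl.sq w false]
      simp [this]
  rw [finrank_eq_card_iff (k := k) (T := ℓ '' {w | w.length = n})
    ((List.finite_length_eq Bool n).image ℓ) (fun σ t ht => IntermediateField.subset_adjoin _ _ (stable_image hl n σ t ht)) (by
      rintro _ ⟨w, _, rfl⟩; exact hl.sep h2 w)
    (fun σ => fun w : {w : List Bool // w.length ≤ n} => σ (ℓ w.1))
    (by
      intro σ σ'
      constructor
      · rintro h _ ⟨w, hw, rfl⟩
        exact congrFun h ⟨w, le_of_eq hw⟩
      · intro h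
        funext w
        exact hdown σ σ' (fun v hv => h _ ⟨v, hv, rfl⟩) (n - w.1.length) w.1 (by have := w.2; omega))
    (fun τ : MsetN r n => fun w : {w : List Bool // w.length ≤ n} => ℓ (τ.1 w)) (by
      intro σ
      obtain ⟨τ, hτ, h⟩ := hLP σ
      refine ⟨⟨_, τ, hτ, rfl⟩, ?_⟩
      funext w
      exact (h w.1).symm)]
  constructor
  · rintro ⟨h1, h3⟩
    refine ⟨fun τ hτ => ?_, fun τ hτ τ' hτ' h w hw => ?_⟩
    · obtain ⟨σ, hσ⟩ := h1 ⟨_, τ, hτ, rfl⟩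
      exact ⟨σ, fun w hw => congrFun hσ ⟨w, hw⟩⟩
    · have := @h3 ⟨_, τ, hτ, rfl⟩ ⟨_, τ', hτ', rfl⟩ (by funext v; exact h v.1 v.2)
      exact congrFun (congrArg Subtype.val this) ⟨w, hw⟩
  · rintro ⟨h1, h3⟩
    constructor
    · rintro ⟨_, τ, hτ, rfl⟩
      obtain ⟨σ, hσ⟩ := h1 τ hτ
      exact ⟨σ, funext fun w => hσ w.1 w.2⟩
    · rintro ⟨_, τ, hτ, rfl⟩ ⟨_, τ', hτ', rfl⟩ h
      refine Subtype.ext (funext fun w => ?_)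
      exact h3 τ hτ τ' hτ' (fun v hv => congrFun h ⟨v, hv⟩) w.1 w.2

lemma IsLab.inj {c x0 : Ω} {ℓ : List Bool → Ω} (h : IsLab c x0 ℓ) (h2 : (2 : Ω) ≠ 0)
    (hnc : ∀ w, ℓ w ≠ c) : ∀ w w' : List Bool, w.length = w'.length → ℓ w = ℓ w' → w = w' := by
  intro w
  induction w using List.reverseRecOn with
  | nil => intro w' hw _; exact (List.length_eq_zero_iff.1 hw.symm).symm
  | append_singleton w s ih =>
    intro w' hw he
    rcases List.eq_nil_or_concat w' with rfl | ⟨v, t, rfl⟩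
    · simp at hw
    rw [List.concat_eq_append] at hw he ⊢
    have h3 : w = v := by
      apply ih v (by simpa using hw)
      rw [← h.sq w s, he, h.sq]
    subst h3
    rw [h.snoc, h.snoc w t] at he
    have h4 : ℓ (w ++ [false]) ≠ 0 := fun h0 => hnc w ((h.zero_iff _ _).1 h0)
    have h5 := mul_right_cancel₀ h4 he
    have h6 : (1 : Ω) ≠ -1 := by
      intro h7; apply h2; linear_combination h7
    cases s <;> cases t <;> simp at h5 ⊢
    · exact h6 h5
    · exact h6 h5.symm

lemma lemmaC' [Normal k Ω] (h2 : (2 : k) ≠ 0) {c x0 : k} {ℓ : List Bool → Ω}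
    (hl : IsLab (algebraMap k Ω c) (algebraMap k Ω x0) ℓ) {r : ℕ} (hLP : LP k r ℓ) (n : ℕ)
    (hX : XP k r ℓ n) (hnc : ∀ w, ℓ w ≠ algebraMap k Ω c) :
    Module.finrank k (IntermediateField.adjoin k (ℓ '' {w | w.length = n})) = Nat.card (MsetN r n) := by
  refine (lemmaC h2 hl hLP n).2 ⟨hX, fun τ hτ τ' hτ' h w hw => ?_⟩
  have h2' : (2 : Ω) ≠ 0 := by
    have := (map_ne_zero (algebraMap k Ω)).2 h2
    rwa [map_ofNat] at this
  exact hl.inj h2' hnc _ _ (by rw [hτ.1.2.1, hτ'.1.2.1]) (h w hw)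

lemma exists_Mset {r : ℕ} (hr : 1 ≤ r) (e0 : Port) :
    ∃ e : Port, e.act ∈ Mset r ∧ Port.agr r e e0 := by
  obtain ⟨e, he, h⟩ := exists_MP hr e0 (P := 1) (by simp)
  exact ⟨e, (Mset_iff hr _).2 ⟨e, mem_Mgrp.2 ⟨1, he⟩, rfl⟩, h⟩

lemma lemmaD {c x0 : k} (h2 : (2 : k) ≠ 0) {ℓ : List Bool → Ω}
    (hl : IsLab (algebraMap k Ω c) (algebraMap k Ω x0) ℓ) {r : ℕ} (hr : 1 ≤ r)
    (hper : (fun z : k => z ^ 2 + c)^[r] 0 = 0)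
    (hmin : ∀ j : ℕ, 1 ≤ j → j < r → (fun z : k => z ^ 2 + c)^[j] 0 ≠ 0)
    (hX : XP k r ℓ 2)
    (hU : ∀ τ ∈ Mset r, ∀ τ' ∈ Mset r, (∀ w, ℓ (τ w) = ℓ (τ' w)) → τ [false] = τ' [false]) :
    ∀ w, ℓ w ≠ algebraMap k Ω c := by
  intro w hw
  have h2' : (2 : Ω) ≠ 0 := by
    have := (map_ne_zero (algebraMap k Ω)).2 h2
    rwa [map_ofNat] at this
  have hmap : ∀ (m : ℕ) (t : k), algebraMap k Ω ((fun z : k => z ^ 2 + c)^[m] t) =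
      (fun z : Ω => z ^ 2 + algebraMap k Ω c)^[m] (algebraMap k Ω t) := by
    intro m
    induction m with
    | zero => intro t; rfl
    | succ m ih => intro t; rw [Function.iterate_succ_apply, ih, Function.iterate_succ_apply]; simp
  set i := w.length with hi
  have hx : (fun z : k => z ^ 2 + c)^[i + 1] 0 = x0 := by
    apply (algebraMap k Ω).injective
    rw [hmap, ← hl.iter w, hw, Function.iterate_succ_apply]
    simp [hi]
  have hq1 : (fun z : k => z ^ 2 + c)^[1] ((fun z : k => z ^ 2 + c)^[i + r] 0) = x0 := by
    rw [← Function.iterate_add_apply, show 1 + (i + r) = (i + 1) + r by ring,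
      Function.iterate_add_apply, hper, hx]
  have hq2 : (fun z : k => z ^ 2 + c)^[2] ((fun z : k => z ^ 2 + c)^[i + (r - 1) + r] 0) = x0 := by
    rw [← Function.iterate_add_apply, show 2 + (i + (r - 1) + r) = (i + 1) + r + r by omega,
      Function.iterate_add_apply, hper, Function.iterate_add_apply, hper, hx]
  obtain ⟨w1, hw1, hl1⟩ := hl.exists_of_iter (by rw [← hmap, hq1])
  obtain ⟨w2, hw2, hl2⟩ := hl.exists_of_iter (by rw [← hmap, hq2])
  have hflip : ∀ (v : List Bool) (s : Bool) (e : Port), e.act ∈ Mset r → e v = true → e.act v = v →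
      v.length + 1 ≤ 2 → ∀ t : k, ℓ (v ++ [s]) = algebraMap k Ω t → ℓ v = algebraMap k Ω c := by
    intro v s e he hev hact hlen t ht
    obtain ⟨σ, hσ⟩ := hX e.act he
    have h1 := hσ (v ++ [s]) (by simpa using hlen)
    rw [ht, AlgEquiv.commutes, Port.act_snoc, hact, hev, ← ht] at h1
    rw [← hl.zero_iff v s]
    have h3 : ℓ (v ++ [s]) = - ℓ (v ++ [s]) := by
      cases s
      · simp only [Bool.false_xor] at h1
        linear_combination hl.neg v + h1
      · simp only [Bool.true_xor, Bool.not_true] at h1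
        linear_combination h1 + hl.neg v
    have : 2 * ℓ (v ++ [s]) = 0 := by linear_combination h3
    exact (mul_eq_zero.1 this).resolve_left h2'
  obtain ⟨s, rfl⟩ := List.length_eq_one_iff.1 hw1
  obtain ⟨s', t, rfl⟩ := List.length_eq_two.1 hw2
  obtain ⟨e1, he1, ha1⟩ := exists_Mset hr (Port.ofFun fun v => decide (v = []))
  have h11 : e1 [] = true := by rw [ha1 [] (by simp; omega), Port.ofFun_apply]; simp
  have hxc : algebraMap k Ω x0 = algebraMap k Ω c := by
    rw [← hl.root]
    exact hflip [] s e1 he1 h11 (by simp) (by simp) _ hl1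
  rcases Nat.lt_or_ge 1 r with hr1 | hr1
  · obtain ⟨e2, he2, ha2⟩ := exists_Mset hr (Port.ofFun fun v => decide (v = [s']))
    have h3 : ℓ [s'] = algebraMap k Ω c := by
      refine hflip [s'] t e2 he2 ?_ ?_ (by simp) _ hl2
      · rw [ha2 _ (by simpa using hr1), Port.ofFun_apply]; simp
      · have := Port.act_snoc e2 [] s'
        rw [ha2 [] (by simp; omega), Port.ofFun_apply] at this
        simpa using this
    have h4 := hl.sq [] s'
    rw [hl.root, hxc, List.nil_append, h3] at h4
    have h5 : algebraMap k Ω c = 0 := by simpa using h4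
    apply hmin 1 le_rfl hr1
    simpa using h5
  · obtain rfl : r = 1 := by omega
    have hc0 : c = 0 := by simpa using hper
    subst hc0
    have hx0 : x0 = 0 := (algebraMap k Ω).injective hxc
    subst hx0
    have hall : ∀ w, ℓ w = 0 := by
      intro w
      induction w using List.reverseRecOn with
      | nil => rw [hl.root, map_zero]
      | append_singleton w s ih =>
        rw [hl.zero_iff, ih, map_zero]
    have h6 := hU e1.act he1 (1 : Port).act ((Mset_iff hr _).2 ⟨1, one_mem _, rfl⟩) (by simp [hall])
    have := Port.act_snoc e1 [] false
    rw [h11] at this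
    simp at this
    rw [this] at h6
    simp at h6

end splitting

/-! ### The field generated by `ζ_8` and the `√D_i` -/

section quad

variable {k : Type*} {Ω : Type*} [Field k] [Field Ω] [Algebra k Ω]

/-- sign -/
noncomputable def sgn (Ω : Type*) [Field Ω] (b : ZMod 2) : Ω := if b = 0 then 1 else -1

lemma sgn_ne (b : ZMod 2) : sgn Ω b ≠ 0 := by
  unfold sgn; split_ifs <;> simp

lemma sgn_inj (h2 : (2 : Ω) ≠ 0) {a b : ZMod 2} (h : sgn Ω a = sgn Ω b) : a = b := by
  have h6 : (1 : Ω) ≠ -1 := by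
    intro h7; apply h2; linear_combination h7
  unfold sgn at h
  rcases zmod2_cases a with rfl | rfl <;> rcases zmod2_cases b with rfl | rfl <;> simp at h ⊢
  · exact h6 h
  · exact h6 h.symm

/-- square roots of `D_{i+1}` -/
noncomputable def Rt (ℓ : List Bool → Ω) (i : ℕ) : Ω := ∏ u ∈ wds i, ℓ (u ++ [false])

lemma Rt_sq {c x0 : Ω} {ℓ : List Bool → Ω} (h : IsLab c x0 ℓ) (i : ℕ) :
    Rt ℓ i ^ 2 = (-1) ^ 2 ^ i * ((fun z : Ω => z ^ 2 + c)^[i] c - x0) := by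
  have h1 := h.prod c i []
  rw [h.root] at h1
  rw [← h1, Rt, ← Finset.prod_pow, ← card_wds i, ← Finset.prod_const, ← Finset.prod_mul_distrib]
  refine Finset.prod_congr rfl fun u _ => ?_
  rw [h.sq', List.nil_append]; ring

lemma act_Rt {c x0 : Ω} {ℓ : List Bool → Ω} (h : IsLab c x0 ℓ) {σ : Ω →+* Ω} {τ : Port} {N : ℕ}
    (hσ : ∀ w : List Bool, w.length ≤ N → σ (ℓ w) = ℓ (τ.act w)) (i : ℕ) (hi : i + 1 ≤ N) :
    σ (Rt ℓ i) = sgn Ω (psi i τ) * Rt ℓ i := by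
  rw [Rt, map_prod]
  have h1 : ∀ u ∈ wds i, σ (ℓ (u ++ [false])) =
      (-1) ^ (τ u).toNat * (fun v => ℓ (v ++ [false])) (τ.act u) := by
    intro u hu
    rw [mem_wds] at hu
    rw [hσ _ (by simp; omega), Port.act_snoc, h.snoc, Bool.false_xor]
  rw [Finset.prod_congr rfl h1, Finset.prod_mul_distrib, prod_wds_act i τ (fun v => ℓ (v ++ [false]))]
  exact congrArg (· * _) (prod_neg_one (wds i) (fun u => τ u))

lemma hmap_iter (c : k) (m : ℕ) (t : k) : algebraMap k Ω ((fun z : k => z ^ 2 + c)^[m] t) =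
      (fun z : Ω => z ^ 2 + algebraMap k Ω c)^[m] (algebraMap k Ω t) := by
  induction m generalizing t with
  | zero => rfl
  | succ m ih => rw [Function.iterate_succ_apply, ih, Function.iterate_succ_apply]; simp

lemma Rt_sq_D {c x0 : k} {ℓ : List Bool → Ω}
    (hl : IsLab (algebraMap k Ω c) (algebraMap k Ω x0) ℓ) {r : ℕ} {D : ℕ → k}
    (hD1 : D 1 = x0 - c)
    (hDi : ∀ i : ℕ, 2 ≤ i → i ≤ r → D i = (fun z : k => z ^ 2 + c)^[i] 0 - x0) (i : ℕ) (hi : i < r) :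
    Rt ℓ i ^ 2 = algebraMap k Ω (D (i + 1)) := by
  rw [Rt_sq hl]
  rcases Nat.eq_zero_or_pos i with rfl | h
  · rw [hD1]; simp
  · rw [hDi _ (by omega) (by omega), map_sub, hmap_iter, Function.iterate_succ_apply,
      Even.neg_one_pow ((even_two).pow_of_ne_zero h.ne')]
    simp

lemma lemmaL [Normal k Ω] (h2 : (2 : k) ≠ 0) {r : ℕ} {D : ℕ → k} {R : Fin r → Ω}
    (hR : ∀ i : Fin r, R i ^ 2 = algebraMap k Ω (D (i + 1))) {ζ : Ω} (hζ : IsPrimitiveRoot ζ 8) :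
    Module.finrank k (IntermediateField.adjoin k
          ({ζ} ∪ {x : Ω | ∃ i : ℕ, 1 ≤ i ∧ i ≤ r ∧ x ^ 2 = algebraMap k Ω (D i)})) = 2 ^ (r + 2) ↔
    (∀ (b : Fin r → ZMod 2) (t : Fin 4), ∃ σ : Ω ≃ₐ[k] Ω, (∀ i, σ (R i) = sgn Ω (b i) * R i) ∧
      σ ζ = ζ ^ (2 * t.val + 1)) ∧ ∀ i, R i ≠ 0 := by
  have h2' : (2 : Ω) ≠ 0 := by
    have := (map_ne_zero (algebraMap k Ω)).2 h2
    rwa [map_ofNat] at this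
  have hsq : ∀ x : Ω, (∃ i : ℕ, 1 ≤ i ∧ i ≤ r ∧ x ^ 2 = algebraMap k Ω (D i)) →
      ∃ i : Fin r, x = R i ∨ x = - R i := by
    rintro x ⟨i, hi1, hi2, hx⟩
    refine ⟨⟨i - 1, by omega⟩, ?_⟩
    rw [← sq_eq_sq_iff_eq_or_eq_neg, hR, hx]
    congr; simp; omega
  have hsq' : ∀ (i : Fin r) (σ : Ω ≃ₐ[k] Ω), ∃ b, sgn Ω b * R i = σ (R i) := by
    intro i σ
    have : σ (R i) = R i ∨ σ (R i) = - R i := by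
      rw [← sq_eq_sq_iff_eq_or_eq_neg, ← map_pow, hR, AlgEquiv.commutes]
    rcases this with h | h
    · exact ⟨0, by simp [sgn, h]⟩
    · exact ⟨1, by simp [sgn, h]⟩
  have hpr : ∀ y : Ω, IsPrimitiveRoot y 8 → ∃ t : Fin 4, ζ ^ (2 * t.val + 1) = y := by
    intro y hy
    have : NeZero 8 := ⟨by norm_num⟩
    obtain ⟨i, hi, hc, h⟩ := hζ.isPrimitiveRoot_iff.1 hy
    have hodd : i % 2 = 1 := by
      have h3 : Nat.Coprime i 2 := Nat.Coprime.coprime_dvd_right (by norm_num : 2 ∣ 8) hc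
      exact Nat.odd_iff.1 (Nat.coprime_two_right.1 h3)
    refine ⟨⟨i / 2, by omega⟩, ?_⟩
    rw [← h]; congr 1; simp; omega
  have hζ0 : ∀ σ : Ω ≃ₐ[k] Ω, ∃ t : Fin 4, ζ ^ (2 * t.val + 1) = σ ζ :=
    fun σ => hpr _ (hζ.map_of_injective σ.injective)
  have hcard : Nat.card ((Fin r → ZMod 2) × Fin 4) = 2 ^ (r + 2) := by
    rw [Nat.card_prod, Nat.card_fun, Nat.card_zmod, Nat.card_fin, Nat.card_fin, pow_add]; norm_num
  have hinj : (∀ i, R i ≠ 0) ↔ Function.Injective (fun a : (Fin r → ZMod 2) × Fin 4 =>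
      ((fun i => sgn Ω (a.1 i) * R i, ζ ^ (2 * a.2.val + 1)) : (Fin r → Ω) × Ω)) := by
    constructor
    · rintro h ⟨b, t⟩ ⟨b', t'⟩ he
      simp only [Prod.mk.injEq] at he ⊢
      constructor
      · funext i
        exact sgn_inj h2' (mul_right_cancel₀ (h i) (congrFun he.1 i))
      · have := hζ.pow_inj (by omega) (by omega) he.2
        ext; omega
    · intro h i h0
      have := @h (0, 0) (Function.update 0 i 1, 0) (by
        simp only [Prod.mk.injEq, and_true]
        funext j
        by_cases hj : j = i
        · subst hj; simp [h0]
        · simp [hj])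
      simp only [Prod.mk.injEq, and_true] at this
      have := congrFun this i
      simp at this
  rw [hinj, ← hcard]
  rw [finrank_eq_card_iff (k := k) (Y := (Fin r → Ω) × Ω)
    (T := ({ζ} ∪ {x : Ω | ∃ i : ℕ, 1 ≤ i ∧ i ≤ r ∧ x ^ 2 = algebraMap k Ω (D i)})) ?_ ?_ ?_
    (fun σ => (fun i => σ (R i), σ ζ)) ?_ (fun a : (Fin r → ZMod 2) × Fin 4 =>
      ((fun i => sgn Ω (a.1 i) * R i, ζ ^ (2 * a.2.val + 1)) : (Fin r → Ω) × Ω)) ?_]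
  · refine and_congr_left fun _ => ?_
    constructor
    · intro h b t
      obtain ⟨σ, hσ⟩ := h (b, t)
      simp only [Prod.mk.injEq] at hσ
      exact ⟨σ, congrFun hσ.1, hσ.2⟩
    · rintro h ⟨b, t⟩
      obtain ⟨σ, h1, h3⟩ := h b t
      exact ⟨σ, Prod.ext (funext h1) h3⟩
  · refine (Set.finite_singleton ζ).union
      (((Set.finite_range R).union (Set.finite_range fun i => - R i)).subset ?_)
    intro x hx
    obtain ⟨i, h | h⟩ := hsq x hx
    · exact Or.inl ⟨i, h.symm⟩
    · exact Or.inr ⟨i, h.symm⟩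
  · rintro σ t (ht | ⟨i, hi1, hi2, hx⟩)
    · rw [Set.mem_singleton_iff] at ht
      subst ht
      obtain ⟨j, hj⟩ := hζ0 σ
      rw [← hj]
      refine pow_mem ?_ _
      apply IntermediateField.subset_adjoin
      exact Or.inl rfl
    · refine IntermediateField.subset_adjoin _ _ <| Or.inr ⟨i, hi1, hi2, ?_⟩
      rw [← map_pow, hx, AlgEquiv.commutes]
  · rintro t (ht | ⟨i, hi1, hi2, hx⟩)
    · rw [Set.mem_singleton_iff] at ht
      subst ht
      have h8 := hζ.pow_eq_one
      apply sep_of_sq h2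
      apply sep_of_sq h2
      apply sep_of_sq h2
      rw [← pow_mul, ← pow_mul, h8]
      rw [← mem_separableClosure_iff]
      exact one_mem _
    · apply sep_of_sq h2
      rw [hx]; exact isSeparable_algebraMap _
  · intro σ σ'
    simp only [Prod.mk.injEq]
    constructor
    · rintro ⟨h1, h3⟩ t (ht | ht)
      · rw [Set.mem_singleton_iff] at ht
        subst ht; exact h3
      · obtain ⟨i, rfl | rfl⟩ := hsq t ht
        · exact congrFun h1 i
        · rw [map_neg, map_neg, congrFun h1 i]
    · intro h
      refine ⟨funext fun i => h _ (Or.inr ⟨i + 1, by omega, by omega, hR i⟩), h _ (Or.inl rfl)⟩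
  · intro σ
    choose b hb using fun i => hsq' i σ
    obtain ⟨t, ht⟩ := hζ0 σ
    exact ⟨(b, t), Prod.ext (funext hb) ht⟩

end quad

/-! ### Main arguments -/

section mainargs

variable {k : Type*} {Ω : Type*} [Field k] [Field Ω] [Algebra k Ω]

lemma two_ne' (h2 : (2 : k) ≠ 0) : (2 : Ω) ≠ 0 := by
  have := (map_ne_zero (algebraMap k Ω)).2 h2
  rwa [map_ofNat] at this

lemma noncrit_of_Rt {c x0 : Ω} {ℓ : List Bool → Ω} (h : IsLab c x0 ℓ) {r : ℕ} (hr : 1 ≤ r)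
    (hper : (fun z : Ω => z ^ 2 + c)^[r] 0 = 0) (hR : ∀ i < r, Rt ℓ i ≠ 0) : ∀ w, ℓ w ≠ c := by
  intro w hw
  have h1 := h.iter w
  rw [hw] at h1
  have hp : Function.IsPeriodicPt (fun z : Ω => z ^ 2 + c) r c := by
    unfold Function.IsPeriodicPt Function.IsFixedPt
    have h3 : (fun z : Ω => z ^ 2 + c)^[1] 0 = c := by simp
    have h4 : (fun z : Ω => z ^ 2 + c)^[r] ((fun z : Ω => z ^ 2 + c)^[1] 0) = (fun z : Ω => z ^ 2 + c)^[1] 0 := by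
      rw [← Function.iterate_add_apply, add_comm, Function.iterate_add_apply, hper]
    rwa [h3] at h4
  have h4 := hp.iterate_mod_apply w.length
  rw [h1] at h4
  apply hR (w.length % r) (Nat.mod_lt _ hr)
  have h5 := Rt_sq h (w.length % r)
  rw [h4, sub_self, mul_zero] at h5
  exact pow_eq_zero_iff (n := 2) (by norm_num) |>.1 h5

lemma Rt_ne {c x0 : Ω} {ℓ : List Bool → Ω} (h : IsLab c x0 ℓ) (hnc : ∀ w, ℓ w ≠ c) (i : ℕ) :
    Rt ℓ i ≠ 0 := by
  refine Finset.prod_ne_zero_iff.2 fun u _ => ?_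
  rw [Ne, h.zero_iff]; exact hnc u

lemma XP_of_bits (h2 : (2 : k) ≠ 0) {c x0 : k} {ℓ : List Bool → Ω}
    (hl : IsLab (algebraMap k Ω c) (algebraMap k Ω x0) ℓ) {r : ℕ} (hr : 1 ≤ r)
    (hper : (fun z : Ω => z ^ 2 + algebraMap k Ω c)^[r] 0 = 0) {Zt : ℕ → Ω} (hZt : IsZt Zt)
    (hg : Good r ℓ Zt)
    (hb : ∀ (b : Fin r → ZMod 2) (t : Fin 4), ∃ σ : Ω ≃ₐ[k] Ω,
      (∀ i : Fin r, σ (Rt ℓ i) = sgn Ω (b i) * Rt ℓ i) ∧ σ (Zt 2) = Zt 2 ^ (2 * t.val + 1))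
    (hR : ∀ i : Fin r, Rt ℓ i ≠ 0) (n : ℕ) : XP k r ℓ n := by
  have h2' : (2 : Ω) ≠ 0 := two_ne' h2
  let E : Subgroup (Mgrp r hr) :=
    { carrier := {τ | ∃ σ : Ω ≃ₐ[k] Ω, ∀ w, σ (ℓ w) = ℓ (τ.1.act w)}
      one_mem' := ⟨1, fun w => by simp⟩
      mul_mem' := by
        rintro τ τ' ⟨σ, h⟩ ⟨σ', h'⟩
        exact ⟨σ * σ', fun w => by simp [h, h', Port.act_mul]⟩
      inv_mem' := by
        rintro τ ⟨σ, h⟩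
        refine ⟨σ⁻¹, fun w => ?_⟩
        apply σ.injective
        rw [h]
        simp [AlgEquiv.aut_inv, Port.act_act_inv] }
  have hE : ∀ τ : Mgrp r hr, ∃ e ∈ E, (∀ i < r, psi i e.1 = psi i τ.1) ∧
      (8 : ℤ_[2]) ∣ PP r e.1 [] - PP r τ.1 [] := by
    intro τ
    have hodd : (2 : ℤ) ∣ p r 2 τ.1 [] - 1 := by
      have h0 := p_odd (r := r) τ.1 []
      have h1 := p_succ r 0 τ.1 []
      have h3 := p_succ r 1 τ.1 []
      norm_num at h1 h3
      omega
    obtain ⟨t, ht⟩ : ∃ t : Fin 4, (8 : ℤ) ∣ p r 2 τ.1 [] - (2 * t.val + 1 : ℕ) := by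
      refine ⟨⟨((p r 2 τ.1 [] - 1) / 2 % 4).toNat, by omega⟩, ?_⟩
      push_cast
      omega
    obtain ⟨σ, hσ1, hσ2⟩ := hb (fun i => psi i τ.1) t
    obtain ⟨e, he, h3, h4⟩ := exists_lift (σ := (σ : Ω →+* Ω)) hr hl hper hZt hg h2'
      (by simp) (by simp)
    refine ⟨⟨e, he⟩, ⟨σ, h3⟩, fun i hi => ?_, ?_⟩
    · have h5 := act_Rt hl (N := i + 1) (fun w _ => h3 w) i le_rfl
      have h6 := hσ1 ⟨i, hi⟩
      have h7 : sgn Ω (psi i e) * Rt ℓ i = sgn Ω (psi i τ.1) * Rt ℓ i := h5.symm.trans h6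
      exact sgn_inj h2' (mul_right_cancel₀ (hR ⟨i, hi⟩) h7)
    · have h5 := h4 [] 2
      have h6 : Zt 2 ^ p r 2 e [] = Zt 2 ^ ((2 * t.val + 1 : ℕ) : ℤ) := by
        rw [zpow_natCast]; exact h5.symm.trans hσ2
      rw [hZt.zpow_eq h2'] at h6
      have h7 : (8 : ℤ) ∣ p r 2 e [] - p r 2 τ.1 [] := by omega
      have h8 := PP_sub_p r 2 e []
      have h9 := PP_sub_p r 2 τ.1 []
      have h10 : (8 : ℤ_[2]) ∣ ((p r 2 e [] - p r 2 τ.1 [] : ℤ) : ℤ_[2]) := by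
        have := (Int.cast_dvd_cast (α := ℤ_[2]) _ _ h7)
        simpa using this
      push_cast at h10
      norm_num at h8 h9
      exact dvd_of_eq_of (dvd_add (dvd_sub h8 h9) h10) (by ring)
  intro τ hτ
  obtain ⟨τ, hτ', rfl⟩ := (Mset_iff hr τ).1 hτ
  obtain ⟨e, ⟨σ, hσ⟩, hag⟩ := dense_of_psi hr E hE n ⟨τ, hτ'⟩
  exact ⟨σ, fun w hw => by rw [hσ, hag.act_eq hw]⟩

lemma bits_of_XP (h2 : (2 : k) ≠ 0) {c x0 : k} {ℓ : List Bool → Ω}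
    (hl : IsLab (algebraMap k Ω c) (algebraMap k Ω x0) ℓ) {r : ℕ} (hr : 1 ≤ r)
    (hper : (fun z : Ω => z ^ 2 + algebraMap k Ω c)^[r] 0 = 0) {Zt : ℕ → Ω} (hZt : IsZt Zt)
    (hg : Good r ℓ Zt) (hnc : ∀ w, ℓ w ≠ algebraMap k Ω c) (hX : XP k r ℓ (2 * r + 1))
    (b : Fin r → ZMod 2) (t : Fin 4) : ∃ σ : Ω ≃ₐ[k] Ω,
      (∀ i : Fin r, σ (Rt ℓ i) = sgn Ω (b i) * Rt ℓ i) ∧ σ (Zt 2) = Zt 2 ^ (2 * t.val + 1) := by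
  have h2' : (2 : Ω) ≠ 0 := two_ne' h2
  classical
  obtain ⟨e, he, hag⟩ := exists_MP hr (Port.ofFun fun v => if h : v.length < r then
    decide (v = List.replicate v.length false ∧ b ⟨v.length, h⟩ ≠ 0) else false)
    (P := ((2 * t.val + 1 : ℕ) : ℤ_[2])) (by push_cast; simp)
  have hpsi : ∀ i : Fin r, psi i e = b i := by
    intro i
    rw [psi_agr i.2 hag, psi]
    rw [Finset.sum_eq_single (List.replicate i.1 false)]
    · rw [Port.ofFun_apply, dif_pos (by simp)]
      rcases zmod2_cases (b i) with h | h <;> simp [h]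
    · intro v hv hne
      rw [mem_wds] at hv
      rw [Port.ofFun_apply]
      rw [← hv] at hne
      simp [hne]
    · intro h; exact absurd (mem_wds.2 (by simp)) h
  obtain ⟨σ, hσ⟩ := hX e.act ((Mset_iff hr _).2 ⟨e, mem_Mgrp.2 ⟨_, he⟩, rfl⟩)
  refine ⟨σ, fun i => ?_, ?_⟩
  · rw [← hpsi i]
    exact act_Rt (σ := (σ : Ω →+* Ω)) hl hσ i (by omega)
  · have h1 := act_Zt (σ := (σ : Ω →+* Ω)) hr hl hper hZt hg (by simp) hσ 2 []
      (by simp; omega) (hnc [])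
    have h3 := PP_sub_p r 2 e []
    rw [he []] at h3
    have h4 : (2 : ℤ) ^ 3 ∣ p r 2 e [] - (2 * t.val + 1 : ℕ) := by
      rw [← int_dvd_iff]
      rw [← dvd_neg]
      push_cast at h3 ⊢
      exact dvd_of_eq_of h3 (by ring)
    rw [← hZt.zpow_eq h2', zpow_natCast] at h4
    exact h1.trans h4

lemma compactness [Normal k Ω] (h2 : (2 : k) ≠ 0) {c x0 : k} {ℓ : List Bool → Ω}
    (hl : IsLab (algebraMap k Ω c) (algebraMap k Ω x0) ℓ) {r : ℕ} (hX : ∀ n, XP k r ℓ n)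
    (K : IntermediateField k Ω) (hK : K = IntermediateField.adjoin k (Set.range ℓ))
    (hmem : ∀ w, ℓ w ∈ K) {τ : List Bool → List Bool} (hτ : τ ∈ Mset r) : 
    ∃ σ : K ≃ₐ[k] K, ∀ w, (σ ⟨ℓ w, hmem w⟩ : Ω) = ℓ (τ w) := by
  have hn : Normal k K := by
    subst hK
    exact adjoin_normal fun σ t ht => IntermediateField.subset_adjoin _ _ (stable_range hl σ t ht)
  have hs : Algebra.IsSeparable k K := by
    subst hK
    refine (IntermediateField.isSeparable_adjoin_iff_isSeparable k Ω).2 ?_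
    rintro _ ⟨w, rfl⟩
    exact hl.sep h2 w
  have hG : IsGalois k K := ⟨⟩
  let Cn : ℕ → Set (K ≃ₐ[k] K) := fun n => {σ | ∀ w : List Bool, w.length ≤ n →
    σ ⟨ℓ w, hmem w⟩ = ⟨ℓ (τ w), hmem (τ w)⟩}
  have hne : ∀ n, (Cn n).Nonempty := by
    intro n
    obtain ⟨σ, hσ⟩ := hX n τ hτ
    refine ⟨AlgEquiv.restrictNormalHom K σ, fun w hw => Subtype.ext ?_⟩
    rw [AlgEquiv.restrictNormalHom_apply]
    exact hσ w hw
  have hcl : ∀ n, IsClosed (Cn n) := by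
    intro n
    obtain ⟨s, hs⟩ := hne n
    have hF : Finite {w : List Bool // w.length ≤ n} := (List.finite_length_le Bool n).to_subtype
    let E : IntermediateField k K := IntermediateField.adjoin k
      (Set.range fun w : {w : List Bool // w.length ≤ n} => (⟨ℓ w.1, hmem w.1⟩ : K))
    have hfd : FiniteDimensional k E :=
      IntermediateField.finiteDimensional_adjoin fun x _ => (Algebra.IsIntegral.isIntegral x)
    have h1 := IntermediateField.fixingSubgroup_isClosed E
    have h3 : Cn n = (fun g => s⁻¹ * g) ⁻¹' (E.fixingSubgroup : Set (K ≃ₐ[k] K)) := by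
      ext g
      simp only [Set.mem_preimage, SetLike.mem_coe, IntermediateField.mem_fixingSubgroup_iff]
      constructor
      · intro hg x hx
        have := adjoin_agree (σ := (s⁻¹ * g).toAlgHom) (σ' := AlgHom.id k K) (T := (Set.range fun w : {w : List Bool // w.length ≤ n} => (⟨ℓ w.1, hmem w.1⟩ : K))) (by
          rintro _ ⟨w, rfl⟩
          change s⁻¹ (g _) = _
          rw [hg w.1 w.2, ← hs w.1 w.2]
          simp [AlgEquiv.aut_inv]) x hx
        exact this
      · intro hg w hw
        have := hg ⟨ℓ w, hmem w⟩ (IntermediateField.subset_adjoin _ _ ⟨⟨w, hw⟩, rfl⟩)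
        rw [← hs w hw]
        have h5 := congrArg s this
        simpa [AlgEquiv.aut_inv] using h5
    rw [h3]
    exact h1.preimage (continuous_const_mul _)
  obtain ⟨σ, hσ⟩ := IsCompact.nonempty_iInter_of_sequence_nonempty_isCompact_isClosed Cn
    (fun n σ h w hw => h w (by omega)) hne (hcl 0).isCompact hcl
  rw [Set.mem_iInter] at hσ
  exact ⟨σ, fun w => congrArg Subtype.val (hσ w.length w le_rfl)⟩

end mainargs
/-- **Main Theorem.** Let `k` be a field of characteristic `≠ 2`,
`f(z) = z² + c ∈ k[z]` with `f^r(0) = 0` for a minimal `r ≥ 1`, and `x₀ ∈ k`. Define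
`D 1 := x₀ − c`, `D i := f^i(0) − x₀` for `2 ≤ i ≤ r`; let `K_{x₀,n}` be the splitting
field of `f^n(X) − x₀` over `k` inside an algebraic closure (the field generated by the
roots of `F n − C x₀`, `F n` being the polynomial iterate `f^n`), `K_{x₀,∞}` their union,
and `G_{x₀,∞} = Gal(K_{x₀,∞}/k)`. The following are equivalent:
(1) `[k(ζ_8, √D_1, …, √D_r) : k] = 2^{r+2}` for a primitive `8`-th root of unity `ζ_8`;
(2) `[K_{x₀,2r+1} : k] = |M_{r,2r+1}|`;
(3) `[K_{x₀,n} : k] = |M_{r,n}|` for every `n ≥ 1`;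
(4) there is a labeling `ℓ` of the tree of iterated preimages of `x₀` such that the map
sending `σ ∈ G_{x₀,∞}` to the tree automorphism `τ` determined by `σ(ℓ(w)) = ℓ(τ(w))`
is a group isomorphism from `G_{x₀,∞}` onto `M_{r,∞}`. -/
theorem main_theorem (k : Type*) [Field k] (hchar : ringChar k ≠ 2) (c x₀ : k)
    (r : ℕ) (hr : 1 ≤ r)
    (hper : (fun z : k => z ^ 2 + c)^[r] 0 = 0)
    (hmin : ∀ j : ℕ, 1 ≤ j → j < r → (fun z : k => z ^ 2 + c)^[j] 0 ≠ 0)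
    (D : ℕ → k)
    (hD1 : D 1 = x₀ - c)
    (hDi : ∀ i : ℕ, 2 ≤ i → i ≤ r → D i = (fun z : k => z ^ 2 + c)^[i] 0 - x₀)
    (F : ℕ → Polynomial k)
    (hF0 : F 0 = X)
    (hFs : ∀ m : ℕ, F (m+1) = (X ^ 2 + C c).comp (F m)) :
    [ -- (1)
      (∀ ζ : AlgebraicClosure k, IsPrimitiveRoot ζ 8 →
        Module.finrank k (IntermediateField.adjoin k
          ({ζ} ∪ {x : AlgebraicClosure k | ∃ i : ℕ, 1 ≤ i ∧ i ≤ r ∧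
            x ^ 2 = algebraMap k (AlgebraicClosure k) (D i)}) :
          IntermediateField k (AlgebraicClosure k)) = 2 ^ (r + 2)),
      -- (2)
      (Module.finrank k (IntermediateField.adjoin k
          ((F (2*r+1) - C x₀).rootSet (AlgebraicClosure k)) :
          IntermediateField k (AlgebraicClosure k)) = Nat.card (MsetN r (2*r+1))),
      -- (3)
      (∀ n : ℕ, 1 ≤ n →
        Module.finrank k (IntermediateField.adjoin k
          ((F n - C x₀).rootSet (AlgebraicClosure k)) :
          IntermediateField k (AlgebraicClosure k)) = Nat.card (MsetN r n)),
      -- (4)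
      (let Kinf : IntermediateField k (AlgebraicClosure k) :=
        ⨆ n : ℕ, IntermediateField.adjoin k ((F n - C x₀).rootSet (AlgebraicClosure k));
       ∃ ℓ : List Bool → AlgebraicClosure k,
        ℓ [] = algebraMap k (AlgebraicClosure k) x₀ ∧
        (∀ (w : List Bool) (s : Bool),
          (ℓ (w ++ [s])) ^ 2 + algebraMap k (AlgebraicClosure k) c = ℓ w) ∧
        (∀ w : List Bool, ℓ (w ++ [false]) = - ℓ (w ++ [true])) ∧
        ∃ hmem : ∀ w : List Bool, ℓ w ∈ Kinf,
          ∃ Φ : (Kinf ≃ₐ[k] Kinf) → (List Bool → List Bool),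
            (∀ (σ : Kinf ≃ₐ[k] Kinf) (w : List Bool),
              σ ⟨ℓ w, hmem w⟩ = ⟨ℓ (Φ σ w), hmem (Φ σ w)⟩) ∧
            Function.Injective Φ ∧
            Set.range Φ = Mset r ∧
            (∀ σ τ : Kinf ≃ₐ[k] Kinf, Φ (σ * τ) = Φ σ ∘ Φ τ))
    ].TFAE := by
  classical
  set Ω := AlgebraicClosure k with hΩ
  have h2 : (2 : k) ≠ 0 := Ring.two_ne_zero hchar
  have h2' : (2 : Ω) ≠ 0 := two_ne' h2
  have hperΩ : (fun z : Ω => z ^ 2 + algebraMap k Ω c)^[r] 0 = 0 := by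
    have := hmap_iter (Ω := Ω) c r 0
    rw [hper, map_zero] at this
    exact this.symm
  obtain ⟨Zt, hZt⟩ := exists_sqrt_seq (Ω := Ω)
  obtain ⟨ℓ0, hl0⟩ := exists_lab (algebraMap k Ω c) (algebraMap k Ω x₀)
  obtain ⟨ℓ, hl, hg⟩ := exists_good hl0 hr hperΩ hZt
  have hLP : LP k r ℓ := by
    intro σ
    obtain ⟨τ, hτ, h3, _⟩ := exists_lift (σ := (σ : Ω →+* Ω)) hr hl hperΩ hZt hg h2'
      (by simp) (by simp)
    exact ⟨τ.act, (Mset_iff hr _).2 ⟨τ, hτ, rfl⟩, h3⟩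
  have hR : ∀ i : Fin r, Rt ℓ i ^ 2 = algebraMap k Ω (D (i + 1)) :=
    fun i => Rt_sq_D hl hD1 hDi i i.2
  have key1 : (∀ ζ : Ω, IsPrimitiveRoot ζ 8 → Module.finrank k (IntermediateField.adjoin k
          ({ζ} ∪ {x : Ω | ∃ i : ℕ, 1 ≤ i ∧ i ≤ r ∧ x ^ 2 = algebraMap k Ω (D i)})) = 2 ^ (r + 2)) →
      (∀ n, XP k r ℓ n) ∧ ∀ w, ℓ w ≠ algebraMap k Ω c := by
    intro h
    have h8 : IsPrimitiveRoot (Zt 2) 8 := hZt.prim h2' 2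
    obtain ⟨h3, h4⟩ := (lemmaL h2 hR h8).1 (h _ h8)
    exact ⟨XP_of_bits h2 hl hr hperΩ hZt hg h3 h4,
      noncrit_of_Rt hl hr hperΩ fun i hi => h4 ⟨i, hi⟩⟩
  tfae_have 1 → 3 := by
    intro h n _
    obtain ⟨hX, hnc⟩ := key1 h
    rw [rootSet_F hF0 hFs hl]
    exact lemmaC' h2 hl hLP n (hX n) hnc
  tfae_have 3 → 2 := fun h => h _ (by omega)
  tfae_have 2 → 1 := by
    intro h ζ hζ
    rw [rootSet_F hF0 hFs hl] at h
    obtain ⟨hX, hU⟩ := (lemmaC h2 hl hLP _).1 h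
    have hnc := lemmaD h2 hl hr hper hmin
      (fun τ hτ => (hX τ hτ).imp fun σ hσ w hw => hσ w (by omega))
      (fun τ hτ τ' hτ' hw => hU τ hτ τ' hτ' (fun w _ => hw w) [false] (by simp))
    rw [lemmaL h2 hR hζ]
    refine ⟨fun b t => ?_, fun i => Rt_ne hl hnc i⟩
    obtain ⟨σ, h3, h4⟩ := bits_of_XP h2 hl hr hperΩ hZt hg hnc hX b t
    refine ⟨σ, h3, ?_⟩
    have h8 : IsPrimitiveRoot (Zt 2) 8 := hZt.prim h2' 2
    have : NeZero 8 := ⟨by norm_num⟩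
    obtain ⟨i, _, rfl⟩ := h8.eq_pow_of_pow_eq_one hζ.pow_eq_one
    rw [map_pow, h4, ← pow_mul, ← pow_mul, mul_comm]
  tfae_have 1 → 4 := by
    intro h
    obtain ⟨hX, hnc⟩ := key1 h
    intro Kinf
    have hK : Kinf = IntermediateField.adjoin k (Set.range ℓ) := iSup_F hF0 hFs hl
    have hmem : ∀ w, ℓ w ∈ Kinf := by
      intro w; rw [hK]; exact IntermediateField.subset_adjoin _ _ ⟨w, rfl⟩
    clear_value Kinf
    refine ⟨ℓ, hl.root, hl.sq, hl.neg, hmem, ?_⟩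
    have hn : Normal k Kinf := by
      rw [hK]
      exact adjoin_normal fun σ t ht => IntermediateField.subset_adjoin _ _ (stable_range hl σ t ht)
    have hlift : ∀ σ : Kinf ≃ₐ[k] Kinf, ∃ τ ∈ Mset r, ∀ w, (σ ⟨ℓ w, hmem w⟩ : Ω) = ℓ (τ w) := by
      intro σ
      obtain ⟨s, rfl⟩ := AlgEquiv.restrictNormalHom_surjective (F := k) (K₁ := Kinf) Ω σ
      obtain ⟨τ, hτ, h3⟩ := hLP s
      refine ⟨τ, hτ, fun w => ?_⟩
      rw [AlgEquiv.restrictNormalHom_apply]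
      exact h3 w
    choose Φ hΦ1 hΦ2 using hlift
    have hinj := hl.inj h2' hnc
    refine ⟨Φ, fun σ w => Subtype.ext (hΦ2 σ w), ?_, ?_, ?_⟩
    · intro σ σ' he
      subst hK
      refine adjoin_agree' ?_
      rintro _ ht ⟨w, rfl⟩
      apply Subtype.ext
      rw [hΦ2, hΦ2, he]
    · refine subset_antisymm ?_ ?_
      · rintro _ ⟨σ, rfl⟩; exact hΦ1 σ
      · intro τ hτ
        obtain ⟨σ, hσ⟩ := compactness h2 hl hX Kinf hK hmem hτ
        refine ⟨σ, funext fun w => ?_⟩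
        apply hinj
        · rw [(hΦ1 σ).1.2.1, hτ.1.2.1]
        · rw [← hΦ2, hσ]
    · intro σ τ
      funext w
      apply hinj
      · rw [(hΦ1 _).1.2.1, Function.comp, (hΦ1 _).1.2.1, (hΦ1 _).1.2.1]
      · rw [← hΦ2, AlgEquiv.mul_apply]
        have h3 : τ ⟨ℓ w, hmem w⟩ = ⟨ℓ (Φ τ w), hmem _⟩ := Subtype.ext (hΦ2 τ w)
        rw [h3, hΦ2, Function.comp]
  tfae_have 4 → 3 := by
    intro h n _
    have hK := fun (ℓ' : List Bool → Ω) (hl' : IsLab (algebraMap k Ω c) (algebraMap k Ω x₀) ℓ') =>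
      iSup_F (Ω := Ω) hF0 hFs hl'
    revert h
    intro h
    obtain ⟨ℓ', hroot, hsq, hneg, hmem, Φ, hΦ, hinj, hrange, -⟩ := h
    have hl' : IsLab (algebraMap k Ω c) (algebraMap k Ω x₀) ℓ' := ⟨hroot, hsq, hneg⟩
    have hK' := hK ℓ' hl'
    generalize (⨆ n : ℕ, IntermediateField.adjoin k ((F n - C x₀).rootSet Ω)) = Kinf at *
    have hn : Normal k Kinf := by
      rw [hK']
      exact adjoin_normal fun σ t ht => IntermediateField.subset_adjoin _ _ (stable_range hl' σ t ht)
    have hLP' : LP k r ℓ' := by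
      intro σ
      refine ⟨Φ (AlgEquiv.restrictNormalHom Kinf σ), hrange ▸ ⟨_, rfl⟩, fun w => ?_⟩
      have := congrArg Subtype.val (hΦ (AlgEquiv.restrictNormalHom Kinf σ) w)
      rw [AlgEquiv.restrictNormalHom_apply] at this
      exact this
    have hX' : ∀ n, XP k r ℓ' n := by
      intro n τ hτ
      rw [← hrange] at hτ
      obtain ⟨σ, rfl⟩ := hτ
      obtain ⟨s, rfl⟩ := AlgEquiv.restrictNormalHom_surjective (F := k) (K₁ := Kinf) Ω σ
      refine ⟨s, fun w _ => ?_⟩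
      have := congrArg Subtype.val (hΦ (AlgEquiv.restrictNormalHom Kinf s) w)
      rw [AlgEquiv.restrictNormalHom_apply] at this
      exact this
    have hnc' := lemmaD h2 hl' hr hper hmin (hX' 2) (by
      intro τ hτ τ' hτ' hw
      rw [← hrange] at hτ hτ'
      obtain ⟨σ, rfl⟩ := hτ
      obtain ⟨σ', rfl⟩ := hτ'
      have : σ = σ' := by
        subst hK'
        refine adjoin_agree' ?_
        rintro _ ht ⟨w, rfl⟩
        rw [hΦ, hΦ]
        exact Subtype.ext (hw w)
      rw [this])
    rw [rootSet_F hF0 hFs hl']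
    exact lemmaC' h2 hl' hLP' n (hX' n) hnc'
  tfae_finish
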